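/- Every connected multigraph of order at least 4 is odd 4-edge-colorable. -/

import Mathlib

/-- A multigraph is given by an edge-index type `E` and an incidence map `f : E → Sym2 V`
(loopless when no `f e` is a diagonal).  `MOddEdgeColorable f k` means: there is an
edge-coloring with `k` colors such that every vertex incident to an edge of a color class
has odd degree in that class. -/
def MOddEdgeColorable {V E : Type*} (f : E → Sym2 V) (k : ℕ) : Prop :=
  ∃ c : E → Fin k, ∀ (i : Fin k) (v : V),
    {e : E | v ∈ f e ∧ c e = i}.ncard ≠ 0 → Odd {e : E | v ∈ f e ∧ c e = i}.ncard

set_option linter.unusedSectionVars false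
set_option linter.all false

namespace OddCol
open Finset
open scoped symmDiff

variable {V : Type*} [Fintype V] [DecidableEq V]

/-- degree -/
def dg (Y : Finset (Sym2 V)) (x : V) : ℕ := (Y.filter (fun e => x ∈ e)).card
/-- parity of the degree -/
def pr (Y : Finset (Sym2 V)) (x : V) : ZMod 2 := (dg Y x : ZMod 2)

def OS (Y : Finset (Sym2 V)) : Prop := ∀ x, dg Y x ≠ 0 → pr Y x = 1

def Closed (K : Finset (Sym2 V)) (C : Finset V) : Prop := ∀ a b, s(a,b) ∈ K → a ∈ C → b ∈ C

def ND (K : Finset (Sym2 V)) : Prop := ∀ a, s(a,a) ∉ K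

lemma z2 (a : ZMod 2) : a = 0 ∨ a = 1 := by
  revert a; decide

lemma z2a (a : ZMod 2) : a + a = 0 := by
  revert a; decide

lemma pr_eq (Y : Finset (Sym2 V)) (x : V) : pr Y x = ∑ e ∈ Y, if x ∈ e then (1 : ZMod 2) else 0 := by
  simp [pr, dg]

lemma pr_symm (Y Z : Finset (Sym2 V)) (x : V) : pr (Y ∆ Z) x = pr Y x + pr Z x := by
  simp only [pr_eq]
  have h1 := Finset.sum_sdiff (f := fun e : Sym2 V => if x ∈ e then (1 : ZMod 2) else 0) (Finset.inter_subset_left : Y ∩ Z ⊆ Y)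
  have h2 := Finset.sum_sdiff (f := fun e : Sym2 V => if x ∈ e then (1 : ZMod 2) else 0) (Finset.inter_subset_right : Y ∩ Z ⊆ Z)
  have h3 : Y ∆ Z = (Y \ (Y ∩ Z)) ∪ (Z \ (Y ∩ Z)) := by
    ext e; simp [Finset.mem_symmDiff]; try tauto
  rw [h3, Finset.sum_union, ← h1, ← h2]
  · generalize (∑ e ∈ Y ∩ Z, if x ∈ e then (1 : ZMod 2) else 0) = a
    have := z2a a
    linear_combination - this
  · rw [Finset.disjoint_left]; intro e; simp; tauto

lemma pr_empty (x : V) : pr ∅ x = 0 := by simp [pr, dg]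

lemma pr_single (a b x : V) : pr {s(a,b)} x = if x = a ∨ x = b then 1 else 0 := by
  rw [pr_eq, Finset.sum_singleton]; simp

lemma pr_union {Y Z : Finset (Sym2 V)} (h : Disjoint Y Z) (x : V) : pr (Y ∪ Z) x = pr Y x + pr Z x := by
  simp only [pr_eq]; exact Finset.sum_union h

lemma dg_union {Y Z : Finset (Sym2 V)} (h : Disjoint Y Z) (x : V) : dg (Y ∪ Z) x = dg Y x + dg Z x := by
  simp only [dg, Finset.filter_union]
  exact Finset.card_union_of_disjoint (Finset.disjoint_filter_filter h)

lemma dg_ne {Y : Finset (Sym2 V)} {x : V} : dg Y x ≠ 0 ↔ ∃ e ∈ Y, x ∈ e := by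
  simp [dg, Finset.filter_eq_empty_iff]

lemma dg_z {Y : Finset (Sym2 V)} {x : V} : dg Y x = 0 ↔ ∀ e ∈ Y, x ∉ e := by
  simp [dg, Finset.filter_eq_empty_iff]

lemma dg_ne_of_pr {Y : Finset (Sym2 V)} {x : V} (h : pr Y x = 1) : dg Y x ≠ 0 := by
  intro h0; simp [pr, h0] at h

lemma pr_of_dg {Y : Finset (Sym2 V)} {x : V} (h : dg Y x = 0) : pr Y x = 0 := by
  simp [pr, h]

lemma pr_z {Y : Finset (Sym2 V)} {x : V} (h : ∀ e ∈ Y, x ∉ e) : pr Y x = 0 := pr_of_dg (dg_z.2 h)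

/-- handshake in a closed set -/
lemma hand {Y : Finset (Sym2 V)} (hnd : ND Y) {C : Finset V} (hC : Closed Y C) :
    ∑ x ∈ C, pr Y x = 0 := by
  simp only [pr_eq]
  rw [Finset.sum_comm]
  apply Finset.sum_eq_zero
  intro e he
  induction e with | _ a b =>
  have hab : a ≠ b := by rintro rfl; exact hnd _ he
  have h1 := hC a b he
  have h2 := hC b a (by rwa [Sym2.eq_swap])
  have : ∀ x, (if x ∈ s(a,b) then (1 : ZMod 2) else 0) = (if x = a then 1 else 0) + (if x = b then 1 else 0) := by
    intro x; by_cases x = a <;> by_cases x = b <;> simp_all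
  simp only [this, Finset.sum_add_distrib, Finset.sum_ite_eq']
  by_cases ha : a ∈ C
  · simp [ha, h1 ha]; decide
  · have : b ∉ C := fun h => ha (h2 h)
    simp [ha, this]

/-- T-joins -/
lemma join (K : Finset (Sym2 V)) : ND K → ∀ t : V → ZMod 2, (∀ C, Closed K C → ∑ x ∈ C, t x = 0) →
    ∃ F ⊆ K, ∀ x, pr F x = t x := by
  induction K using Finset.induction_on with
  | empty =>
    intro _ t h
    refine ⟨∅, by simp, fun x => ?_⟩
    have := h {x} (by intro a b h; simp at h)
    simp at this
    simp [pr_empty, this]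
  | insert e K he ih =>
    intro hnd t h
    have hndK : ND K := fun a ha => hnd a (Finset.mem_insert_of_mem ha)
    by_cases h0 : ∀ C, Closed K C → ∑ x ∈ C, t x = 0
    · obtain ⟨F, hF, hp⟩ := ih hndK t h0
      exact ⟨F, hF.trans (Finset.subset_insert _ _), hp⟩
    · push Not at h0
      obtain ⟨C0, hC0, hs0⟩ := h0
      have hs0' : ∑ x ∈ C0, t x = 1 := (z2 _).resolve_left hs0
      induction e with | _ a b =>
      have hab : a ≠ b := by rintro rfl; exact hnd _ (Finset.mem_insert_self _ _)
      have key : ∀ C, Closed K C → (a ∈ C ↔ b ∈ C) → ∑ x ∈ C, t x = 0 := by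
        intro C hC hh
        apply h
        intro c d hcd hc
        rw [Finset.mem_insert] at hcd
        rcases hcd with hcd | hcd
        · rw [Sym2.eq_iff] at hcd
          rcases hcd with ⟨rfl, rfl⟩ | ⟨rfl, rfl⟩
          · exact hh.1 hc
          · exact hh.2 hc
        · exact hC _ _ hcd hc
      have hsep0 : ¬ (a ∈ C0 ↔ b ∈ C0) := fun hh => hs0 (key C0 hC0 hh)
      obtain ⟨F, hF, hp⟩ := ih hndK (fun x => t x + pr {s(a,b)} x) (by
        intro C hC
        have hsum : ∑ x ∈ C, pr {s(a,b)} x = (if a ∈ C then 1 else 0) + (if b ∈ C then 1 else 0) := by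
          have : ∀ x, pr {s(a,b)} x = (if x = a then (1:ZMod 2) else 0) + (if x = b then 1 else 0) := by
            intro x; rw [pr_single]; by_cases x = a <;> by_cases x = b <;> simp_all
          simp only [this, Finset.sum_add_distrib, Finset.sum_ite_eq']
        rw [Finset.sum_add_distrib, hsum]
        by_cases hsep : (a ∈ C ↔ b ∈ C)
        · rw [key C hC hsep]
          by_cases hb : b ∈ C
          · simp [hsep, hb]; decide
          · simp [hsep, hb]
        · have hCl : Closed K (C ∆ C0) := by
            intro c d hcd hc
            have hdc : s(d,c) ∈ K := by rwa [Sym2.eq_swap]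
            have := hC c d hcd; have := hC d c hdc
            have := hC0 c d hcd; have := hC0 d c hdc
            rw [Finset.mem_symmDiff] at hc ⊢; tauto
          have h1 := key _ hCl (by simp only [Finset.mem_symmDiff]; tauto)
          have h3 : ∑ x ∈ C ∆ C0, t x = ∑ x ∈ C, t x + ∑ x ∈ C0, t x := by
            have e1 := Finset.sum_sdiff (f := t) (Finset.inter_subset_left : C ∩ C0 ⊆ C)
            have e2 := Finset.sum_sdiff (f := t) (Finset.inter_subset_right : C ∩ C0 ⊆ C0)
            have e3 : C ∆ C0 = (C \ (C ∩ C0)) ∪ (C0 \ (C ∩ C0)) := by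
              ext e; simp [Finset.mem_symmDiff]; try tauto
            rw [e3, Finset.sum_union, ← e1, ← e2]
            · have := z2a (∑ x ∈ C ∩ C0, t x)
              linear_combination - this
            · rw [Finset.disjoint_left]; intro e; simp; tauto
          rw [h3, hs0'] at h1
          by_cases ha : a ∈ C
          · have hb : b ∉ C := by tauto
            simp [ha, hb, h1]
          · have hb : b ∈ C := by tauto
            simp [ha, hb, h1])
      refine ⟨F ∆ {s(a,b)}, ?_, fun x => ?_⟩
      · intro e he
        rw [Finset.mem_symmDiff] at he
        rw [Finset.mem_insert]
        rcases he with he | he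
        · exact Or.inr (hF he.1)
        · exact Or.inl (by simpa using he.1)
      · rw [pr_symm, hp, add_assoc, z2a, add_zero]

def Acyc (L : Finset (Sym2 V)) : Prop := ∀ Z ⊆ L, (∀ x, pr Z x = 0) → Z = ∅

lemma Acyc.mono {L M : Finset (Sym2 V)} (h : Acyc L) (hM : M ⊆ L) : Acyc M :=
  fun Z hZ hz => h Z (hZ.trans hM) hz

/-- minimal T-joins -/
lemma minjoin (K : Finset (Sym2 V)) (hnd : ND K) (t : V → ZMod 2) (h : ∀ C, Closed K C → ∑ x ∈ C, t x = 0) :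
    ∃ F ⊆ K, (∀ x, pr F x = t x) ∧ (∀ F' ⊆ K, (∀ x, pr F' x = t x) → F.card ≤ F'.card) := by
  obtain ⟨F0, hF0, hp0⟩ := join K hnd t h
  obtain ⟨F, hF, hm⟩ := Finset.exists_min_image (K.powerset.filter (fun F => ∀ x, pr F x = t x)) Finset.card
    ⟨F0, by simp [hF0, hp0]⟩
  simp only [Finset.mem_filter, Finset.mem_powerset] at hF hm
  exact ⟨F, hF.1, hF.2, fun F' h1 h2 => hm F' ⟨h1, h2⟩⟩

lemma acyc_of_min {K F : Finset (Sym2 V)} {t : V → ZMod 2} (hF : F ⊆ K) (hp : ∀ x, pr F x = t x)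
    (hm : ∀ F' ⊆ K, (∀ x, pr F' x = t x) → F.card ≤ F'.card) : Acyc F := by
  intro Z hZ hz
  have := hm (F \ Z) (Finset.sdiff_subset.trans hF) (by
    intro x
    have : F \ Z = F ∆ Z := by
      ext e; simp only [Finset.mem_sdiff, Finset.mem_symmDiff]
      have := @hZ e; tauto
    rw [this, pr_symm, hz, hp, add_zero])
  rw [Finset.card_sdiff_of_subset hZ] at this
  have h2 := Finset.card_le_card hZ
  have : Z.card = 0 := by omega
  exact Finset.card_eq_zero.1 this

/-- potentials on forests -/
lemma potential (L : Finset (Sym2 V)) : ND L → Acyc L → ∀ w : Sym2 V → ZMod 2,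
    ∃ β : V → ZMod 2, ∀ a b, s(a,b) ∈ L → β a + β b = w s(a,b) := by
  induction L using Finset.induction_on with
  | empty => intro _ _ w; exact ⟨0, by simp⟩
  | insert e L he ih =>
    intro hnd hac w
    have hndL : ND L := fun a ha => hnd a (Finset.mem_insert_of_mem ha)
    obtain ⟨β, hβ⟩ := ih hndL (hac.mono (Finset.subset_insert _ _)) w
    induction e with | _ a b =>
    have hab : a ≠ b := by rintro rfl; exact hnd _ (Finset.mem_insert_self _ _)
    have hC : ∃ C, Closed L C ∧ ¬ (a ∈ C ↔ b ∈ C) := by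
      by_contra hcon
      push Not at hcon
      obtain ⟨P, hP, hp⟩ := join L hndL (pr {s(a,b)}) (by
        intro C hC
        have hsum : ∑ x ∈ C, pr {s(a,b)} x = (if a ∈ C then 1 else 0) + (if b ∈ C then 1 else 0) := by
          have : ∀ x, pr {s(a,b)} x = (if x = a then (1:ZMod 2) else 0) + (if x = b then 1 else 0) := by
            intro x; rw [pr_single]; by_cases x = a <;> by_cases x = b <;> simp_all
          simp only [this, Finset.sum_add_distrib, Finset.sum_ite_eq']
        rw [hsum]
        have := hcon C hC
        by_cases hb : b ∈ C
        · simp [this, hb]; decide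
        · simp [this, hb])
      have hn : s(a,b) ∉ P := fun h => he (hP h)
      have := hac (insert s(a,b) P) (Finset.insert_subset_insert _ hP) (by
        intro x
        rw [Finset.insert_eq, pr_union (by simpa using hn), hp, z2a])
      simp at this
    obtain ⟨C, hC, hsep⟩ := hC
    by_cases hw : β a + β b = w s(a,b)
    · refine ⟨β, ?_⟩
      intro c d hcd
      rw [Finset.mem_insert] at hcd
      rcases hcd with hcd | hcd
      · rw [hcd, ← hw]
        rw [Sym2.eq_iff] at hcd
        rcases hcd with ⟨rfl, rfl⟩ | ⟨rfl, rfl⟩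
        · rfl
        · rw [add_comm]
      · exact hβ _ _ hcd
    · refine ⟨fun x => β x + if x ∈ C then 1 else 0, ?_⟩
      have h1 : β a + β b + 1 = w s(a,b) := by
        revert hw; generalize β a + β b = p; generalize w s(a,b) = q; revert p q; decide
      intro c d hcd
      rw [Finset.mem_insert] at hcd
      have aux : ∀ c d, ¬ (c ∈ C ↔ d ∈ C) → (β c + if c ∈ C then 1 else 0) + (β d + if d ∈ C then 1 else 0) = β c + β d + 1 := by
        intro c d h
        by_cases hc : c ∈ C
        · have : d ∉ C := by tauto
          simp [hc, this]; ring
        · have : d ∈ C := by tauto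
          simp [hc, this]; ring
      rcases hcd with hcd | hcd
      · rw [hcd, ← h1]
        rw [Sym2.eq_iff] at hcd
        rcases hcd with ⟨rfl, rfl⟩ | ⟨rfl, rfl⟩
        · exact aux _ _ hsep
        · simp only; rw [aux _ _ (by tauto)]; ring
      · rw [← hβ _ _ hcd]
        have h1 := hC _ _ hcd
        have h2 := hC d c (by rwa [Sym2.eq_swap])
        by_cases hc : c ∈ C
        · simp only [hc, h1 hc, if_true]; have := z2a (1 : ZMod 2); linear_combination this
        · have : d ∉ C := fun h => hc (h2 h)
          simp [hc, this]

/-- two-colouring of forests -/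
lemma twocol {L : Finset (Sym2 V)} (hnd : ND L) (hac : Acyc L) (Sp : V → Prop) (hSp : ∀ x, Sp x → pr L x = 0) :
    ∃ A B : Finset (Sym2 V), A ∪ B = L ∧ Disjoint A B ∧ (∀ x, ¬ Sp x → dg A x = 0 ∨ dg B x = 0) ∧
      (∀ x, Sp x → dg L x ≠ 0 → pr A x = 1 ∧ pr B x = 1) := by
  classical
  have hm : ∀ x : V, ∃ m : Sym2 V, (dg L x ≠ 0 → m ∈ L ∧ x ∈ m) := by
    intro x
    by_cases h : dg L x ≠ 0
    · obtain ⟨m, h1, h2⟩ := dg_ne.1 h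
      exact ⟨m, fun _ => ⟨h1, h2⟩⟩
    · exact ⟨s(x,x), fun h' => absurd h' h⟩
  choose m hm using hm
  let π : V → Sym2 V → ZMod 2 := fun x e => if Sp x ∧ e = m x then 1 else 0
  obtain ⟨β, hβ⟩ := potential L hnd hac (fun e => Sym2.lift ⟨fun a b => π a e + π b e, fun a b => add_comm _ _⟩ e)
  simp only [Sym2.lift_mk] at hβ
  -- colour
  let col : Sym2 V → ZMod 2 := fun e => if h : ∃ x, x ∈ e then β h.choose + π h.choose e else 0
  have hcol : ∀ e ∈ L, ∀ x ∈ e, col e = β x + π x e := by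
    intro e he x hx
    have h : ∃ x, x ∈ e := ⟨x, hx⟩
    simp only [col, dif_pos h]
    have hc := h.choose_spec
    generalize h.choose = y at hc
    by_cases hxy : y = x
    · rw [hxy]
    · have : e = s(y,x) := (Sym2.mem_and_mem_iff hxy).1 ⟨hc, hx⟩
      have h2 := hβ y x (this ▸ he)
      rw [← this] at h2
      have h3 := z2a (π x e); have h4 := z2a (β x)
      linear_combination h2 + h3 - h4 + (π y e - π x e) - (π y e - π x e) + z2a (π y e) - z2a (π x e) - z2a (β x) + z2a (β x) 
  refine ⟨L.filter (fun e => col e = 0), L.filter (fun e => ¬ col e = 0), Finset.filter_union_filter_not_eq _ _,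
    Finset.disjoint_filter_filter_not _ _ _, ?_, ?_⟩
  · intro x hx
    have : ∀ e ∈ L, x ∈ e → col e = β x := by
      intro e he hxe; rw [hcol e he x hxe]; simp [π, hx]
    rcases z2 (β x) with h | h
    · right; rw [dg_z]; intro e he hxe
      simp only [Finset.mem_filter] at he
      exact he.2 ((this e he.1 hxe).trans h)
    · left; rw [dg_z]; intro e he hxe
      simp only [Finset.mem_filter] at he
      have := this e he.1 hxe
      rw [he.2, h] at this; simp at this
  · intro x hx hd
    obtain ⟨hmL, hxm⟩ := hm x hd
    have h1 : ∀ e ∈ L, x ∈ e → col e = β x + if e = m x then 1 else 0 := by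
      intro e he hxe; rw [hcol e he x hxe]; simp [π, hx]
    have hsum : pr (L.filter (fun e => col e = 0)) x + pr (L.filter (fun e => ¬ col e = 0)) x = 0 := by
      rw [← pr_union (Finset.disjoint_filter_filter_not _ _ _), Finset.filter_union_filter_not_eq, hSp x hx]
    have hs : pr {m x} x = 1 := by rw [pr_eq, Finset.sum_singleton, if_pos hxm]
    have goal : pr (L.filter (fun e => col e = 0)) x = 1 ∨ pr (L.filter (fun e => ¬ col e = 0)) x = 1 := by
      rcases z2 (β x) with h | h
      · right
        have : pr (L.filter (fun e => ¬ col e = 0)) x = pr {m x} x := by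
          unfold pr dg; congr 2; ext e
          simp only [Finset.mem_filter, Finset.mem_singleton]
          constructor
          · rintro ⟨⟨h2, h3⟩, h4⟩
            refine ⟨?_, h4⟩
            rw [h1 e h2 h4, h] at h3; by_contra hh; simp [hh] at h3
          · rintro ⟨rfl, h4⟩
            refine ⟨⟨hmL, ?_⟩, h4⟩
            rw [h1 _ hmL h4, h]; simp
        rw [this, hs]
      · left
        have : pr (L.filter (fun e => col e = 0)) x = pr {m x} x := by
          unfold pr dg; congr 2; ext e
          simp only [Finset.mem_filter, Finset.mem_singleton]
          constructor
          · rintro ⟨⟨h2, h3⟩, h4⟩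
            refine ⟨?_, h4⟩
            rw [h1 e h2 h4, h] at h3; by_contra hh; simp [hh] at h3
          · rintro ⟨rfl, h4⟩
            refine ⟨⟨hmL, ?_⟩, h4⟩
            rw [h1 _ hmL h4, h]; simp; decide
        rw [this, hs]
    revert hsum goal
    generalize pr (L.filter (fun e => col e = 0)) x = p
    generalize pr (L.filter (fun e => ¬ col e = 0)) x = q
    revert p q; decide

end OddCol

set_option linter.unusedSectionVars false
set_option linter.all false
namespace OddCol
open Finset
open scoped symmDiff
variable {V : Type*} [Fintype V] [DecidableEq V]

def Good (S D : Finset (Sym2 V)) : Prop :=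
  ∃ Y : Fin 4 → Finset (Sym2 V), (∀ k, OS (Y k)) ∧ (∀ k, Y k ⊆ S ∪ D) ∧
    (∀ e ∈ S, ∃ i, ∀ j, e ∈ Y j ↔ j = i) ∧
    (∀ e ∈ D, (∃ i j, i ≠ j ∧ ∀ k, e ∈ Y k ↔ k = i ∨ k = j) ∨
      ((∀ k, e ∉ Y k) ∧ ∃ i, ∀ x ∈ e, dg (Y i) x ≠ 0))

lemma final {E : Type*} [Fintype E] [DecidableEq E] (f : E → Sym2 V) 
    (hg : Good (univ.filter fun p => Odd (univ.filter fun e => f e = p).card)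
      (univ.filter fun p => Even (univ.filter fun e => f e = p).card ∧ (univ.filter fun e => f e = p).card ≠ 0)) :
    MOddEdgeColorable f 4 := by
  obtain ⟨Y, hos, hsub, hS, hD⟩ := hg
  have key : ∀ p : Sym2 V, ∃ c : E → Fin 4, (∀ k, (((univ.filter fun e => f e = p ∧ c e = k).card : ℕ) : ZMod 2) = if p ∈ Y k then 1 else 0) ∧
      (∀ e, f e = p → p ∈ Y (c e) ∨ ∀ x ∈ p, dg (Y (c e)) x ≠ 0) := by
    intro p
    by_cases hp : p ∈ (univ.filter fun p => Odd (univ.filter fun e => f e = p).card)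
    · obtain ⟨i, hi⟩ := hS p hp
      simp only [mem_filter, mem_univ, true_and] at hp
      refine ⟨fun _ => i, fun k => ?_, fun e he => Or.inl ((hi i).2 rfl)⟩
      by_cases hk : k = i
      · subst hk
        rw [if_pos ((hi k).2 rfl)]
        simp only [and_true]
        exact (ZMod.natCast_eq_one_iff_odd).2 hp
      · rw [if_neg (fun h => hk ((hi k).1 h))]
        have : ∀ e, ¬ (f e = p ∧ i = k) := fun e h => hk h.2.symm
        simp [this]
    · by_cases hp2 : p ∈ (univ.filter fun p => Even (univ.filter fun e => f e = p).card ∧ (univ.filter fun e => f e = p).card ≠ 0)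
      · rcases hD p hp2 with ⟨i, j, hij, hk⟩ | ⟨hk, i, hi⟩
        · simp only [mem_filter, mem_univ, true_and] at hp2
          obtain ⟨e0, he0⟩ := Finset.card_ne_zero.1 hp2.2
          simp only [mem_filter, mem_univ, true_and] at he0
          have hfi : (univ.filter fun e => f e = p ∧ (if e = e0 then i else j) = i) = {e0} := by
            ext e; simp only [mem_filter, mem_univ, true_and, mem_singleton]
            constructor
            · rintro ⟨_, h⟩; by_contra hh; rw [if_neg hh] at h; exact hij h.symm
            · rintro rfl; simp [he0]
          refine ⟨fun e => if e = e0 then i else j, fun k => ?_, fun e he => Or.inl ?_⟩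
          · by_cases hki : k = i
            · subst hki
              rw [if_pos ((hk _).2 (Or.inl rfl)), hfi]; simp
            · by_cases hkj : k = j
              · subst hkj
                rw [if_pos ((hk _).2 (Or.inr rfl))]
                have h2 : (univ.filter fun e => f e = p ∧ (if e = e0 then i else k) = k) = (univ.filter fun e => f e = p).erase e0 := by
                  ext e; simp only [mem_filter, mem_univ, true_and, mem_erase]
                  by_cases h : e = e0 <;> simp [h, hij]
                rw [h2, Finset.card_erase_of_mem (by simp [he0]), ZMod.natCast_eq_one_iff_odd]
                exact Nat.Even.sub_odd (Nat.one_le_iff_ne_zero.2 hp2.2) hp2.1 odd_one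
              · rw [if_neg (fun h => ((hk _).1 h).elim hki hkj)]
                have : ∀ e, ¬ (f e = p ∧ (if e = e0 then i else j) = k) := by
                  rintro e ⟨_, h⟩; split_ifs at h
                  · exact hki h.symm
                  · exact hkj h.symm
                simp [this]
          · by_cases h : e = e0
            · simp only [h, if_true]; exact (hk _).2 (Or.inl rfl)
            · simp only [h, if_false]; exact (hk _).2 (Or.inr rfl)
        · simp only [mem_filter, mem_univ, true_and] at hp2
          refine ⟨fun _ => i, fun k => ?_, fun e he => Or.inr hi⟩
          rw [if_neg (hk k)]
          by_cases hki : i = k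
          · simp only [hki, and_true]; exact (ZMod.natCast_eq_zero_iff_even).2 hp2.1
          · simp [hki]
      · simp only [mem_filter, mem_univ, true_and] at hp hp2
        have h0 : (univ.filter fun e => f e = p).card = 0 := by
          by_contra h
          exact hp2 ⟨Nat.not_odd_iff_even.1 hp, h⟩
        have h1 : ∀ e, f e ≠ p := by
          intro e he
          have := Finset.card_eq_zero.1 h0
          have h3 : e ∈ (univ.filter fun e => f e = p) := by simp [he]
          rw [this] at h3; simp at h3
        have h2 : ∀ k, p ∉ Y k := by
          intro k h; have := hsub k h
          simp only [mem_union, mem_filter, mem_univ, true_and] at this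
          tauto
        exact ⟨fun _ => 0, fun k => by simp [h1, h2], fun e he => absurd he (h1 e)⟩
  choose c hc1 hc2 using key
  refine ⟨fun e => c (f e) e, fun i v hne => ?_⟩
  have hset : {e : E | v ∈ f e ∧ c (f e) e = i} = ↑(univ.filter fun e => v ∈ f e ∧ c (f e) e = i) := by
    ext e; simp
  rw [hset, Set.ncard_coe_finset] at hne ⊢
  obtain ⟨e0, he0⟩ := Finset.card_ne_zero.1 hne
  simp only [mem_filter, mem_univ, true_and] at he0
  have hdg : dg (Y i) v ≠ 0 := by
    rcases hc2 (f e0) e0 rfl with h | h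
    · rw [dg_ne]; exact ⟨f e0, by rw [← he0.2]; exact h, he0.1⟩
    · rw [← he0.2]; exact h v he0.1
  rw [← ZMod.natCast_eq_one_iff_odd, ← hos i v hdg]
  have hfib := Finset.card_eq_sum_card_fiberwise (f := f) (s := univ.filter fun e => v ∈ f e ∧ c (f e) e = i) (t := univ) (by intro x _; simp)
  rw [hfib, Nat.cast_sum, pr_eq]
  have : ∀ p : Sym2 V, ((((univ.filter fun e => v ∈ f e ∧ c (f e) e = i).filter fun e => f e = p).card : ℕ) : ZMod 2) = if p ∈ Y i then (if v ∈ p then 1 else 0) else 0 := by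
    intro p
    have h := hc1 p i
    by_cases hv : v ∈ p
    · rw [if_pos hv, ← h]
      congr 2; ext e; simp only [mem_filter, mem_univ, true_and]
      constructor
      · rintro ⟨⟨h1, h2⟩, h3⟩; subst h3; exact ⟨rfl, h2⟩
      · rintro ⟨h1, h2⟩; subst h1; exact ⟨⟨hv, h2⟩, rfl⟩
    · rw [if_neg hv]
      have : ∀ e, ¬ ((v ∈ f e ∧ c (f e) e = i) ∧ f e = p) := by
        rintro e ⟨⟨h1, h2⟩, h3⟩; rw [h3] at h1; exact hv h1
      simp [Finset.filter_filter, this]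
  simp only [this]
  rw [← Finset.sum_filter]; congr 1; ext p; simp

/-- convenient constructor -/
lemma mkGood {S D : Finset (Sym2 V)} (Y1 Y2 Y3 Y4 : Finset (Sym2 V))
    (o1 : OS Y1) (o2 : OS Y2) (o3 : OS Y3) (o4 : OS Y4)
    (hsub : ∀ e, (e ∈ Y1 ∨ e ∈ Y2 ∨ e ∈ Y3 ∨ e ∈ Y4) → e ∈ S ∪ D)
    (hS : ∀ e ∈ S, (e ∈ Y1 ∧ e ∉ Y2 ∧ e ∉ Y3 ∧ e ∉ Y4) ∨ (e ∉ Y1 ∧ e ∈ Y2 ∧ e ∉ Y3 ∧ e ∉ Y4) ∨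
      (e ∉ Y1 ∧ e ∉ Y2 ∧ e ∈ Y3 ∧ e ∉ Y4) ∨ (e ∉ Y1 ∧ e ∉ Y2 ∧ e ∉ Y3 ∧ e ∈ Y4))
    (hD : ∀ e ∈ D, (e ∈ Y1 ∧ e ∈ Y2 ∧ e ∉ Y3 ∧ e ∉ Y4) ∨ (e ∈ Y1 ∧ e ∉ Y2 ∧ e ∈ Y3 ∧ e ∉ Y4) ∨
      (e ∈ Y1 ∧ e ∉ Y2 ∧ e ∉ Y3 ∧ e ∈ Y4) ∨ (e ∉ Y1 ∧ e ∈ Y2 ∧ e ∈ Y3 ∧ e ∉ Y4) ∨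
      (e ∉ Y1 ∧ e ∈ Y2 ∧ e ∉ Y3 ∧ e ∈ Y4) ∨ (e ∉ Y1 ∧ e ∉ Y2 ∧ e ∈ Y3 ∧ e ∈ Y4) ∨
      ((e ∉ Y1 ∧ e ∉ Y2 ∧ e ∉ Y3 ∧ e ∉ Y4) ∧ ((∀ x ∈ e, dg Y1 x ≠ 0) ∨ (∀ x ∈ e, dg Y2 x ≠ 0) ∨
        (∀ x ∈ e, dg Y3 x ≠ 0) ∨ (∀ x ∈ e, dg Y4 x ≠ 0)))) : Good S D := by
  refine ⟨![Y1, Y2, Y3, Y4], ?_, ?_, ?_, ?_⟩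
  · intro k; fin_cases k <;> simpa
  · intro k e he; fin_cases k <;> simp at he <;> apply hsub <;> tauto
  · intro e he
    rcases hS e he with h | h | h | h
    · exact ⟨0, by intro j; fin_cases j <;> simp [h]⟩
    · exact ⟨1, by intro j; fin_cases j <;> simp [h]⟩
    · exact ⟨2, by intro j; fin_cases j <;> simp [h]⟩
    · exact ⟨3, by intro j; fin_cases j <;> simp [h]⟩
  · intro e he
    rcases hD e he with h | h | h | h | h | h | h
    · exact Or.inl ⟨0, 1, by decide, by intro j; fin_cases j <;> simp [h]⟩
    · exact Or.inl ⟨0, 2, by decide, by intro j; fin_cases j <;> simp [h]⟩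
    · exact Or.inl ⟨0, 3, by decide, by intro j; fin_cases j <;> simp [h]⟩
    · exact Or.inl ⟨1, 2, by decide, by intro j; fin_cases j <;> simp [h]⟩
    · exact Or.inl ⟨1, 3, by decide, by intro j; fin_cases j <;> simp [h]⟩
    · exact Or.inl ⟨2, 3, by decide, by intro j; fin_cases j <;> simp [h]⟩
    · obtain ⟨⟨a1, a2, a3, a4⟩, h⟩ := h
      refine Or.inr ⟨by intro j; fin_cases j <;> simpa, ?_⟩
      rcases h with h | h | h | h
      · exact ⟨0, by simpa using h⟩
      · exact ⟨1, by simpa using h⟩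
      · exact ⟨2, by simpa using h⟩
      · exact ⟨3, by simpa using h⟩

structure Ctx (S D : Finset (Sym2 V)) : Prop where
  disj : ∀ e, e ∈ S → e ∈ D → False
  nd : ND (S ∪ D)
  conn : ∀ C, C.Nonempty → Closed (S ∪ D) C → C = univ

/-- even colouring of a forest -/
lemma colE {L : Finset (Sym2 V)} (hnd : ND L) (hac : Acyc L) :
    ∃ A B : Finset (Sym2 V), A ∪ B = L ∧ Disjoint A B ∧ OS A ∧ OS B ∧ 
      (∀ x, pr L x = 0 → dg L x ≠ 0 → dg A x ≠ 0 ∧ dg B x ≠ 0) := by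
  obtain ⟨A, B, hAB, hd, h1, h2⟩ := twocol hnd hac (fun x => pr L x = 0) (fun x h => h)
  have hp : ∀ x, pr L x = pr A x + pr B x := fun x => by rw [← hAB, pr_union hd]
  have hdd : ∀ x, dg L x = dg A x + dg B x := fun x => by rw [← hAB, dg_union hd]
  refine ⟨A, B, hAB, hd, ?_, ?_, ?_⟩
  · intro x hx
    by_cases hL : pr L x = 0
    · exact (h2 x hL (by have := hdd x; omega)).1
    · have h := (h1 x hL).resolve_left hx
      have := hp x; rw [pr_of_dg h, add_zero] at this
      rw [← this]; exact (z2 _).resolve_left hL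
  · intro x hx
    by_cases hL : pr L x = 0
    · exact (h2 x hL (by have := hdd x; omega)).2
    · have h := (h1 x hL).resolve_right hx
      have := hp x; rw [pr_of_dg h, zero_add] at this
      rw [← this]; exact (z2 _).resolve_left hL
  · intro x hL hx
    have := h2 x hL hx
    exact ⟨dg_ne_of_pr this.1, dg_ne_of_pr this.2⟩

lemma T0 {S D : Finset (Sym2 V)} (h : Ctx S D) (F Y1 Y4 : Finset (Sym2 V)) (hF : F ⊆ S ∪ D) (hac : Acyc F)
    (hY : Y1 ∪ Y4 = S ∆ F) (hd : Disjoint Y1 Y4) (o1 : OS Y1) (o4 : OS Y4)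
    (hab : ∀ e ∈ D, e ∉ F → (∀ x ∈ e, dg Y1 x ≠ 0) ∨ (∀ x ∈ e, dg Y4 x ≠ 0)) : Good S D := by
  obtain ⟨A, B, hAB, hdAB, oA, oB, _⟩ := colE (fun a ha => h.nd a (hF ha)) hac
  have m1 : ∀ e, (e ∈ Y1 ∨ e ∈ Y4) ↔ (e ∈ S ∧ e ∉ F ∨ e ∈ F ∧ e ∉ S) := by
    intro e; rw [← mem_union, hY, mem_symmDiff]
  have m2 : ∀ e, (e ∈ A ∨ e ∈ B) ↔ e ∈ F := by intro e; rw [← mem_union, hAB]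
  have d1 : ∀ e, e ∈ Y1 → e ∉ Y4 := fun e he => Finset.disjoint_left.1 hd he
  have d2 : ∀ e, e ∈ A → e ∉ B := fun e he => Finset.disjoint_left.1 hdAB he
  refine mkGood Y1 A B Y4 o1 oA oB o4 ?_ ?_ ?_
  · intro e he
    have := m1 e; have := m2 e; have := @hF e; rw [mem_union] at *; tauto
  · intro e he
    have := m1 e; have := m2 e; have := d1 e; have := d2 e
    clear hab o1 o4 oA oB hac hY hAB hd hdAB
    grind
  · intro e he
    have := m1 e; have := m2 e; have := d1 e; have := d2 e
    have := h.disj e; have hab := hab e he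
    by_cases heF : e ∈ F
    · clear hab o1 o4 oA oB hac hY hAB hd hdAB
      grind
    · have hh := hab heF
      right; right; right; right; right; right
      refine ⟨?_, hh.elim Or.inl (fun h => Or.inr (Or.inr (Or.inr h)))⟩
      clear hab hh o1 o4 oA oB hac hY hAB hd hdAB
      grind

lemma sum_one (C : Finset V) : ∑ x ∈ C, (1 : ZMod 2) = (C.card : ZMod 2) := by simp

lemma OS_of {Y : Finset (Sym2 V)} (h : ∀ x, dg Y x = 0 ∨ pr Y x = 1) : OS Y := fun x hx => (h x).resolve_left hx

lemma OS_empty : OS (∅ : Finset (Sym2 V)) := by intro x hx; simp [dg] at hx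

lemma ctx_sum {S D : Finset (Sym2 V)} (h : Ctx S D) (t : V → ZMod 2) (ht : ∑ x, t x = 0) :
    ∀ C, Closed (S ∪ D) C → ∑ x ∈ C, t x = 0 := by
  intro C hC
  rcases C.eq_empty_or_nonempty with rfl | hne
  · simp
  · rw [h.conn C hne hC]; exact ht

lemma hand_univ {Y : Finset (Sym2 V)} (hnd : ND Y) : ∑ x, pr Y x = 0 := hand hnd (by intro a b _ _; simp)

lemma T1 {S D : Finset (Sym2 V)} (h : Ctx S D) (hn : Even (Fintype.card V)) : Good S D := by
  have hndS : ND S := fun a ha => h.nd a (mem_union_left _ ha)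
  obtain ⟨F, hF, hp, hm⟩ := minjoin (S ∪ D) h.nd (fun x => pr S x + 1) (ctx_sum h _ (by
    rw [Finset.sum_add_distrib, hand_univ hndS, sum_one, zero_add, ZMod.natCast_eq_zero_iff_even]; simpa using hn))
  have hp1 : ∀ x, pr (S ∆ F) x = 1 := by
    intro x; rw [pr_symm, hp, ← add_assoc, z2a, zero_add]
  refine T0 h F (S ∆ F) ∅ hF (acyc_of_min hF hp hm) (by simp) (by simp) (fun x _ => hp1 x) OS_empty ?_
  intro e _ _; left; intro x _; exact dg_ne_of_pr (hp1 x)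

def off (S : Finset (Sym2 V)) (v : V) := S.filter (fun e => v ∉ e)
def ato (S : Finset (Sym2 V)) (v : V) := S.filter (fun e => v ∈ e)

lemma mem_off {S : Finset (Sym2 V)} {v e} : e ∈ off S v ↔ e ∈ S ∧ v ∉ e := by simp [off]
lemma mem_ato {S : Finset (Sym2 V)} {v e} : e ∈ ato S v ↔ e ∈ S ∧ v ∈ e := by simp [ato]

lemma T2 {S D : Finset (Sym2 V)} (h : Ctx S D) (hn : Odd (Fintype.card V)) (hg : ¬ Good S D) (v : V) (C : Finset V)
    (hv : v ∉ C) (hC : Closed (off (S ∪ D) v) C) : (C.card : ZMod 2) = 0 := by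
  by_contra hodd
  have hodd : (C.card : ZMod 2) = 1 := (z2 _).resolve_left hodd
  apply hg
  have hndS : ND S := fun a ha => h.nd a (mem_union_left _ ha)
  obtain ⟨F, hF, hp, hm⟩ := minjoin (S ∪ D) h.nd (fun x => pr S x + (1 + if x = v then 1 else 0)) (ctx_sum h _ (by
    rw [Finset.sum_add_distrib, hand_univ hndS, Finset.sum_add_distrib, sum_one, zero_add]
    have : ((univ : Finset V).card : ZMod 2) = 1 := by rw [ZMod.natCast_eq_one_iff_odd]; simpa using hn
    rw [this]; simp; decide))
  have hp1 : ∀ x, pr (S ∆ F) x = 1 + if x = v then 1 else 0 := by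
    intro x; rw [pr_symm, hp, ← add_assoc, z2a, zero_add]
  have hSF : S ∆ F ⊆ S ∪ D := by
    intro e he; rw [mem_symmDiff] at he
    rcases he with he | he
    · exact mem_union_left _ he.1
    · exact hF he.1
  have hcl : ∀ a b, s(a,b) ∈ S ∪ D → a ∈ C → b ∈ C ∨ b = v := by
    intro a b hab ha
    by_cases hb : b = v
    · exact Or.inr hb
    · left
      refine hC a b (mem_off.2 ⟨hab, ?_⟩) ha
      rw [Sym2.mem_iff]; rintro (rfl | rfl)
      · exact hv ha
      · exact hb rfl
  set Y1 := (S ∆ F).filter (fun e => ∃ x ∈ C, x ∈ e) with hY1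
  set Y4 := (S ∆ F).filter (fun e => ¬ ∃ x ∈ C, x ∈ e) with hY4
  have hun : Y1 ∪ Y4 = S ∆ F := Finset.filter_union_filter_not_eq _ _
  have hdj : Disjoint Y1 Y4 := Finset.disjoint_filter_filter_not _ _ _
  have hpp : ∀ x, pr (S ∆ F) x = pr Y1 x + pr Y4 x := by intro x; rw [← hun, pr_union hdj]
  have c1 : ∀ x ∈ C, dg Y4 x = 0 := by
    intro x hx; rw [dg_z]; intro e he hxe
    rw [hY4, mem_filter] at he; exact he.2 ⟨x, hx, hxe⟩
  have c1' : ∀ x ∈ C, pr Y1 x = 1 := by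
    intro x hx
    have h1 := hpp x
    rw [pr_of_dg (c1 x hx), add_zero, hp1, if_neg (by rintro rfl; exact hv hx), add_zero] at h1
    exact h1.symm
  have c2 : ∀ x ∉ C, x ≠ v → dg Y1 x = 0 := by
    intro x hx hxv; rw [dg_z]; intro e he hxe
    rw [hY1, mem_filter] at he
    obtain ⟨he, y, hy, hye⟩ := he
    have hne : y ≠ x := by rintro rfl; exact hx hy
    have : e = s(y,x) := (Sym2.mem_and_mem_iff hne).1 ⟨hye, hxe⟩
    subst this
    rcases hcl y x (hSF he) hy with h | h
    · exact hx h
    · exact hxv h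
  have c2' : ∀ x ∉ C, x ≠ v → pr Y4 x = 1 := by
    intro x hx hxv
    have h1 := hpp x
    rw [pr_of_dg (c2 x hx hxv), zero_add, hp1, if_neg hxv, add_zero] at h1
    exact h1.symm
  have cv : pr Y1 v = 1 := by
    have h1 := hand (Y := Y1) (fun a ha => h.nd a (hSF (mem_filter.1 ha).1)) (C := insert v C) (by
      intro a b hab ha
      by_contra hb
      rw [mem_insert] at hb
      push Not at hb
      exact absurd (c2 b hb.2 hb.1) (dg_ne.2 ⟨_, hab, by simp⟩))
    rw [Finset.sum_insert hv, Finset.sum_congr rfl c1', sum_one, hodd] at h1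
    revert h1; generalize pr Y1 v = q; revert q; decide
  have cv' : pr Y4 v = 1 := by
    have h1 := hpp v
    rw [cv, hp1, if_pos rfl] at h1
    revert h1; generalize pr Y4 v = q; revert q; decide
  refine T0 h F Y1 Y4 hF (acyc_of_min hF hp hm) hun hdj ?_ ?_ ?_
  · intro x hx
    by_cases h1 : x ∈ C
    · exact c1' x h1
    · by_cases h2 : x = v
      · rw [h2]; exact cv
      · exact absurd (c2 x h1 h2) hx
  · intro x hx
    by_cases h1 : x ∈ C
    · exact absurd (c1 x h1) hx
    · by_cases h2 : x = v
      · rw [h2]; exact cv'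
      · exact c2' x h1 h2
  · intro e he _
    by_cases hy : ∃ x ∈ C, x ∈ e
    · left
      obtain ⟨y, hy, hye⟩ := hy
      intro x hx
      by_cases hxC : x ∈ C
      · exact dg_ne_of_pr (c1' x hxC)
      · have hne : y ≠ x := by rintro rfl; exact hxC hy
        have : e = s(y,x) := (Sym2.mem_and_mem_iff hne).1 ⟨hye, hx⟩
        subst this
        have := (hcl y x (mem_union_right _ he) hy).resolve_left hxC
        rw [this]; exact dg_ne_of_pr cv
    · right
      push Not at hy
      intro x hx
      by_cases h2 : x = v
      · rw [h2]; exact dg_ne_of_pr cv'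
      · exact dg_ne_of_pr (c2' x (fun h => hy x h hx) h2)

end OddCol

set_option linter.unusedSectionVars false
set_option linter.all false
namespace OddCol
open Finset
open scoped symmDiff
variable {V : Type*} [Fintype V] [DecidableEq V]

lemma mem_exists {v : V} {e : Sym2 V} (h : v ∈ e) : ∃ u, e = s(v,u) := by
  obtain ⟨u, hu⟩ := Sym2.mem_iff_exists.1 h; exact ⟨u, hu⟩

lemma CL {S D : Finset (Sym2 V)} (h : Ctx S D) (v : V) (F X R Q Y2 Y3 : Finset (Sym2 V))
    (hF : ∀ e ∈ F, e ∈ S ∪ D ∧ v ∉ e) (hX : ∀ e ∈ X, e ∈ S ∪ D ∧ v ∉ e)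
    (hR : ∀ e ∈ R, e ∈ S ∪ D ∧ v ∈ e) (hQ : ∀ e ∈ Q, e ∈ D ∧ v ∈ e ∧ e ∉ R)
    (hFX : ∀ e ∈ F, e ∈ X → e ∉ S)
    (h23 : ∀ e, (e ∈ Y2 ∧ e ∈ Y3) ↔ e ∈ Q) (h23' : ∀ e, (e ∈ Y2 ∨ e ∈ Y3) ↔ (e ∈ F ∨ e ∈ R ∨ e ∈ Q))
    (o1 : ∀ x, x ≠ v → pr F x = 1 + pr (off S v) x + pr X x)
    (o2 : OS Y2) (o3 : OS Y3) (o4 : OS (ato S v ∆ R ∆ X))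
    (hab : ∀ u, s(v,u) ∈ D → s(v,u) ∉ R → s(v,u) ∉ Q → (dg Y2 v ≠ 0 ∧ dg Y2 u ≠ 0) ∨ (dg Y3 v ≠ 0 ∧ dg Y3 u ≠ 0) ∨
      (dg (ato S v ∆ R ∆ X) v ≠ 0 ∧ dg (ato S v ∆ R ∆ X) u ≠ 0)) : Good S D := by
  have m1 : ∀ e, e ∈ off S v ∆ F ∆ X ↔ (e ∈ S ∧ v ∉ e ∧ e ∉ F ∧ e ∉ X) ∨ (e ∉ S ∧ e ∈ F ∧ e ∉ X) ∨ (e ∉ S ∧ e ∉ F ∧ e ∈ X) := by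
    intro e
    have a1 := hF e; have a2 := hX e; have a3 := hFX e
    simp only [mem_symmDiff, mem_off]
    clear hab o2 o3 o4 o1 h23 h23'
    grind
  have m4 : ∀ e, e ∈ ato S v ∆ R ∆ X ↔ (e ∈ S ∧ v ∈ e ∧ e ∉ R) ∨ (e ∉ S ∧ e ∈ R) ∨ (e ∈ X) := by
    intro e
    have a1 := hR e; have a2 := hX e
    simp only [mem_symmDiff, mem_ato]
    clear hab o2 o3 o4 o1 h23 h23'
    grind
  have p1 : ∀ x, x ≠ v → pr (off S v ∆ F ∆ X) x = 1 := by
    intro x hx; rw [pr_symm, pr_symm, o1 x hx]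
    linear_combination z2a (pr (off S v) x) + z2a (pr X x)
  have o1' : OS (off S v ∆ F ∆ X) := by
    intro x hx
    by_cases hxv : x = v
    · exfalso
      apply hx; subst hxv; rw [dg_z]; intro e he hxe
      have := (m1 e).1 he
      have a1 := hF e; have a2 := hX e
      tauto
    · exact p1 x hxv
  generalize off S v ∆ F ∆ X = Y1 at *
  generalize ato S v ∆ R ∆ X = Y4 at *
  refine mkGood Y1 Y2 Y3 Y4 o1' o2 o3 o4 ?_ ?_ ?_
  · intro e he
    have a1 := hF e; have a2 := hX e; have a3 := hR e; have a4 := hQ e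
    have a5 := m1 e; have a6 := m4 e; have a7 := h23' e
    rw [mem_union] at *
    clear hab o2 o3 o4 o1 p1 h23 h23'
    grind
  · intro e he
    have a1 := hF e; have a2 := hX e; have a3 := hR e; have a4 := hQ e
    have a5 := m1 e; have a6 := m4 e; have a7 := h23' e; have a8 := h23 e; have a9 := h.disj e; have a0 := hFX e
    clear hab o2 o3 o4 o1 p1 h23 h23' hF hX hR hQ hFX m1 m4
    grind
  · intro e he
    have a1 := hF e; have a2 := hX e; have a3 := hR e; have a4 := hQ e
    have a5 := m1 e; have a6 := m4 e; have a7 := h23' e; have a8 := h23 e; have a9 := h.disj e; have a0 := hFX e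
    by_cases hc : e ∉ F ∧ e ∉ X ∧ e ∉ R ∧ e ∉ Q
    · right; right; right; right; right; right
      refine ⟨?_, ?_⟩
      · clear hab o2 o3 o4 o1 p1 h23 h23' hF hX hR hQ hFX m1 m4
        grind
      · by_cases hve : v ∈ e
        · obtain ⟨u, rfl⟩ := mem_exists hve
          have := hab u he hc.2.2.1 hc.2.2.2
          simp only [Sym2.mem_iff, forall_eq_or_imp, forall_eq]
          exact Or.inr this
        · left; intro x hx; apply dg_ne_of_pr; apply p1; rintro rfl; exact hve hx
    · clear hab o2 o3 o4 o1 p1 h23 h23' hF hX hR hQ hFX m1 m4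
      grind

lemma pr_ato {S : Finset (Sym2 V)} {v x : V} (hx : x ≠ v) : pr (ato S v) x = if s(v,x) ∈ S then 1 else 0 := by
  unfold pr dg ato
  have : ((S.filter (fun e => v ∈ e)).filter (fun e => x ∈ e)) = S.filter (fun e => e = s(v,x)) := by
    rw [Finset.filter_filter]
    apply Finset.filter_congr
    intro e _
    exact Sym2.mem_and_mem_iff hx.symm
  rw [this, Finset.filter_eq']
  split_ifs <;> simp

lemma pr_ato_self {S : Finset (Sym2 V)} {v : V} : pr (ato S v) v = pr S v := by
  unfold pr dg ato; rw [Finset.filter_filter]; simp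

lemma pr_off {S : Finset (Sym2 V)} {v x : V} (hx : x ≠ v) : pr (off S v) x = pr S x + if s(v,x) ∈ S then 1 else 0 := by
  have h1 : pr S x = pr (ato S v) x + pr (off S v) x := by
    rw [← pr_union, ato, off, Finset.filter_union_filter_not_eq]
    exact Finset.disjoint_filter_filter_not _ _ _
  rw [h1, pr_ato hx]
  linear_combination - z2a (if s(v,x) ∈ S then (1 : ZMod 2) else 0)

lemma dg_ato {S : Finset (Sym2 V)} {v x : V} (hx : x ≠ v) : dg (ato S v) x ≠ 0 ↔ s(v,x) ∈ S := by
  rw [dg_ne]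
  constructor
  · rintro ⟨e, he, hxe⟩
    rw [mem_ato] at he
    rw [← (Sym2.mem_and_mem_iff hx.symm).1 ⟨he.2, hxe⟩]; exact he.1
  · intro h; exact ⟨_, mem_ato.2 ⟨h, by simp⟩, by simp⟩

/-- the star at v -/
def star (v : V) (P : Finset V) : Finset (Sym2 V) := P.image (fun u => s(v,u))

lemma mem_star {v : V} {P : Finset V} {e : Sym2 V} : e ∈ star v P ↔ ∃ u ∈ P, e = s(v,u) := by
  simp [star, eq_comm]

lemma star_mk {v u : V} {P : Finset V} (hP : v ∉ P) : s(v,u) ∈ star v P ↔ u ∈ P := by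
  rw [mem_star]
  constructor
  · rintro ⟨w, hw, he⟩
    rw [Sym2.eq_iff] at he
    rcases he with ⟨_, rfl⟩ | ⟨rfl, _⟩
    · exact hw
    · exact absurd hw hP
  · intro h; exact ⟨u, h, rfl⟩

lemma pr_star_self {v : V} {P : Finset V} : pr (star v P) v = P.card := by
  unfold pr dg star
  congr 1
  rw [Finset.filter_true_of_mem, Finset.card_image_of_injective]
  · intro a b; simp; rintro (h | ⟨rfl, rfl⟩) <;> simp_all
  · intro e he; rw [mem_image] at he; obtain ⟨u, _, rfl⟩ := he; simp

lemma pr_star {v x : V} {P : Finset V} (hP : v ∉ P) (hx : x ≠ v) : pr (star v P) x = if x ∈ P then 1 else 0 := by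
  have : star v P = ato (star v P) v := by
    ext e; rw [mem_ato]; constructor
    · intro h; refine ⟨h, ?_⟩; obtain ⟨u, _, rfl⟩ := mem_star.1 h; simp
    · exact fun h => h.1
  rw [this, pr_ato hx]; simp [star_mk hP]

lemma CLE {S D : Finset (Sym2 V)} (h : Ctx S D) (v : V) (F X R : Finset (Sym2 V))
    (hF : ∀ e ∈ F, e ∈ S ∪ D ∧ v ∉ e) (hX : ∀ e ∈ X, e ∈ S ∪ D ∧ v ∉ e)
    (hR : ∀ e ∈ R, e ∈ S ∪ D ∧ v ∈ e) 
    (hFX : ∀ e ∈ F, e ∈ X → e ∉ S) (hac : Acyc (F ∪ R))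
    (o1 : ∀ x, x ≠ v → pr F x = 1 + pr (off S v) x + pr X x)
    (o4 : OS (ato S v ∆ R ∆ X))
    (hab : ∀ u, s(v,u) ∈ D → s(v,u) ∉ R → (dg (F ∪ R) v ≠ 0 ∧ pr (F ∪ R) v = 0 ∧ dg (F ∪ R) u ≠ 0) ∨
      (dg (ato S v ∆ R ∆ X) v ≠ 0 ∧ dg (ato S v ∆ R ∆ X) u ≠ 0)) : Good S D := by
  obtain ⟨A, B, hAB, hd, oA, oB, hs⟩ := colE (L := F ∪ R) (by
    intro a ha; rw [mem_union] at ha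
    exact h.nd a (ha.elim (fun h => (hF _ h).1) (fun h => (hR _ h).1))) hac
  refine CL h v F X R ∅ A B hF hX hR (by simp) hFX ?_ ?_ o1 oA oB o4 ?_
  · intro e; simp; exact fun h => Finset.disjoint_left.1 hd h
  · intro e; rw [← mem_union, hAB]; simp
  · intro u h1 h2 _
    rcases hab u h1 h2 with ⟨a, b, c⟩ | h
    · have h3 := hs v b a
      have h4 : dg (F ∪ R) u = dg A u + dg B u := by rw [← hAB, dg_union hd]
      by_cases h5 : dg A u = 0
      · right; left; exact ⟨h3.2, by omega⟩
      · left; exact ⟨h3.1, h5⟩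
    · exact Or.inr (Or.inr h)

lemma CLP {S D : Finset (Sym2 V)} (h : Ctx S D) (v : V) (F X R : Finset (Sym2 V)) (P : Finset V)
    (hF : ∀ e ∈ F, e ∈ S ∪ D ∧ v ∉ e) (hX : ∀ e ∈ X, e ∈ S ∪ D ∧ v ∉ e)
    (hR : ∀ e ∈ R, e ∈ S ∪ D ∧ v ∈ e) (hP : Odd P.card) (hPD : ∀ u ∈ P, s(v,u) ∈ D ∧ s(v,u) ∉ R)
    (hPL : ∀ u ∈ P, pr (F ∪ R) u = 0)
    (hFX : ∀ e ∈ F, e ∈ X → e ∉ S) (hac : Acyc (F ∪ R)) (hLv : pr (F ∪ R) v = 0)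
    (o1 : ∀ x, x ≠ v → pr F x = 1 + pr (off S v) x + pr X x)
    (o4 : OS (ato S v ∆ R ∆ X))
    (hab : ∀ u, s(v,u) ∈ D → s(v,u) ∉ R → u ∉ P → dg (F ∪ R) u ≠ 0 ∨
      (dg (ato S v ∆ R ∆ X) v ≠ 0 ∧ dg (ato S v ∆ R ∆ X) u ≠ 0)) : Good S D := by
  have hvP : v ∉ P := fun hv => h.nd v (mem_union_right _ (hPD v hv).1)
  have hndL : ND (F ∪ R) := by
    intro a ha; rw [mem_union] at ha
    exact h.nd a (ha.elim (fun h => (hF _ h).1) (fun h => (hR _ h).1))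
  obtain ⟨A, B, hAB, hd, h1, h2⟩ := twocol hndL hac (fun x => x ∉ P ∧ x ≠ v ∧ pr (F ∪ R) x = 0) (fun x h => h.2.2)
  have hp : ∀ x, pr (F ∪ R) x = pr A x + pr B x := fun x => by rw [← hAB, pr_union hd]
  have hdd : ∀ x, dg (F ∪ R) x = dg A x + dg B x := fun x => by rw [← hAB, dg_union hd]
  have hmL : ∀ e, (e ∈ A ∨ e ∈ B) ↔ (e ∈ F ∨ e ∈ R) := by intro e; rw [← mem_union, hAB, mem_union]
  have hstar : ∀ e ∈ star v P, e ∈ D ∧ v ∈ e ∧ e ∉ R := by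
    intro e he; obtain ⟨u, hu, rfl⟩ := mem_star.1 he
    exact ⟨(hPD u hu).1, by simp, (hPD u hu).2⟩
  have hnL : ∀ e ∈ star v P, e ∉ A ∧ e ∉ B := by
    intro e he
    have a1 := hstar e he; have a2 := hmL e; have a3 := hF e
    tauto
  have hdA : Disjoint A (star v P) := Finset.disjoint_right.2 (fun e he => (hnL e he).1)
  have hdB : Disjoint B (star v P) := Finset.disjoint_right.2 (fun e he => (hnL e he).2)
  have hcard : (P.card : ZMod 2) = 1 := (ZMod.natCast_eq_one_iff_odd).2 hP
  -- both classes even at v and P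
  have hmono : ∀ x, (x = v ∨ x ∈ P) → pr A x = 0 ∧ pr B x = 0 := by
    intro x hx
    have hL : pr (F ∪ R) x = 0 := by
      rcases hx with rfl | hx
      · exact hLv
      · exact hPL x hx
    rw [hp] at hL
    rcases h1 x (by tauto) with h | h
    · rw [pr_of_dg h] at hL ⊢; rw [zero_add] at hL; exact ⟨rfl, hL⟩
    · rw [pr_of_dg h] at hL ⊢; rw [add_zero] at hL; exact ⟨hL, rfl⟩
  have hstp : ∀ x, (x = v ∨ x ∈ P) → pr (star v P) x = 1 := by
    intro x hx
    by_cases hxv : x = v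
    · rw [hxv, pr_star_self, hcard]
    · rw [pr_star hvP hxv, if_pos (hx.resolve_left hxv)]
  have hst0 : ∀ x, ¬ (x = v ∨ x ∈ P) → dg (star v P) x = 0 := by
    intro x hx; rw [dg_z]; intro e he hxe
    obtain ⟨u, hu, rfl⟩ := mem_star.1 he
    rw [Sym2.mem_iff] at hxe
    rcases hxe with rfl | rfl <;> tauto
  have oA : OS (A ∪ star v P) := by
    intro x hx
    rw [pr_union hdA]
    by_cases hc : x = v ∨ x ∈ P
    · rw [(hmono x hc).1, hstp x hc, zero_add]
    · rw [dg_union hdA, hst0 x hc] at hx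
      rw [pr_of_dg (hst0 x hc), add_zero]
      by_cases hL : pr (F ∪ R) x = 0
      · exact (h2 x (by tauto) (by have := hdd x; omega)).1
      · have h := (h1 x (by tauto)).resolve_left (by omega)
        have := hp x; rw [pr_of_dg h, add_zero] at this
        rw [← this]; exact (z2 _).resolve_left hL
  have oB : OS (B ∪ star v P) := by
    intro x hx
    rw [pr_union hdB]
    by_cases hc : x = v ∨ x ∈ P
    · rw [(hmono x hc).2, hstp x hc, zero_add]
    · rw [dg_union hdB, hst0 x hc] at hx
      rw [pr_of_dg (hst0 x hc), add_zero]
      by_cases hL : pr (F ∪ R) x = 0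
      · exact (h2 x (by tauto) (by have := hdd x; omega)).2
      · have h := (h1 x (by tauto)).resolve_right (by omega)
        have := hp x; rw [pr_of_dg h, zero_add] at this
        rw [← this]; exact (z2 _).resolve_left hL
  refine CL h v F X R (star v P) (A ∪ star v P) (B ∪ star v P) hF hX hR hstar hFX ?_ ?_ o1 oA oB o4 ?_
  · intro e
    have a1 := hnL e
    have a2 : e ∈ A → e ∉ B := fun h => Finset.disjoint_left.1 hd h
    simp only [mem_union]; tauto
  · intro e
    have := hmL e
    simp only [mem_union]; tauto
  · intro u h3 h4 h5
    rw [star_mk hvP] at h5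
    rcases hab u h3 h4 h5 with c | h
    · have hv1 := dg_ne_of_pr (hstp v (Or.inl rfl))
      have h6 := hdd u
      rw [dg_union hdA, dg_union hdB, dg_union hdA, dg_union hdB]
      by_cases h5 : dg A u = 0
      · right; left; constructor <;> omega
      · left; constructor <;> omega
    · exact Or.inr (Or.inr h)

lemma off_nd {K : Finset (Sym2 V)} (h : ND K) (v : V) : ND (off K v) := fun a ha => h a (mem_off.1 ha).1

/-- standard joins away from v -/
lemma stdjoin {S D : Finset (Sym2 V)} (h : Ctx S D) (hn : Odd (Fintype.card V)) (hg : ¬ Good S D) (v : V)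
    (X : Finset (Sym2 V)) (hX : X ⊆ off (S ∪ D) v) :
    ∃ F, (∀ e ∈ F, e ∈ S ∪ D ∧ v ∉ e) ∧ (∀ x, x ≠ v → pr F x = 1 + pr (off S v) x + pr X x) ∧ Acyc F ∧
      (∀ F', (∀ e ∈ F', e ∈ S ∪ D ∧ v ∉ e) → (∀ x, x ≠ v → pr F' x = 1 + pr (off S v) x + pr X x) → F.card ≤ F'.card) := by
  obtain ⟨F, hF, hp, hm⟩ := minjoin (off (S ∪ D) v) (off_nd h.nd v)
    (fun x => if x = v then 0 else 1 + pr (off S v) x + pr X x) (by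
    intro C hC
    have hC' : Closed (off (S ∪ D) v) (C.erase v) := by
      intro a b hab ha
      rw [mem_erase] at ha ⊢
      refine ⟨?_, hC a b hab ha.2⟩
      rintro rfl; rw [mem_off] at hab; simp at hab
    have e1 : ∑ x ∈ C, (if x = v then 0 else 1 + pr (off S v) x + pr X x) = ∑ x ∈ C.erase v, (1 + pr (off S v) x + pr X x) := by
      rw [← Finset.sum_erase C (a := v) (by simp)]
      apply Finset.sum_congr rfl
      intro x hx; rw [if_neg (mem_erase.1 hx).1]
    rw [e1, Finset.sum_add_distrib, Finset.sum_add_distrib, sum_one, T2 h hn hg v _ (by simp) hC']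
    have e2 := hand (Y := off S v) (C := C.erase v) (fun a ha => h.nd a (mem_union_left _ (mem_off.1 ha).1)) (by
      intro a b hab ha
      rw [mem_off] at hab
      exact hC' a b (mem_off.2 ⟨mem_union_left _ hab.1, hab.2⟩) ha)
    have e3 := hand (Y := X) (C := C.erase v) (fun a ha => h.nd a (mem_off.1 (hX ha)).1) (by
      intro a b hab ha
      exact hC' a b (hX hab) ha)
    rw [e2, e3]; simp)
  refine ⟨F, fun e he => mem_off.1 (hF he), fun x hx => by rw [hp, if_neg hx], acyc_of_min hF hp hm, ?_⟩
  intro F' h1 h2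
  apply hm F' (fun e he => mem_off.2 (h1 e he))
  intro x
  by_cases hx : x = v
  · rw [if_pos hx]; apply pr_z; intro e he; rw [hx]; exact (h1 e he).2
  · rw [if_neg hx, h2 x hx]

end OddCol

set_option linter.unusedSectionVars false
set_option linter.all false
namespace OddCol
open Finset
open scoped symmDiff
variable {V : Type*} [Fintype V] [DecidableEq V]

lemma sde (A : Finset (Sym2 V)) : A ∆ ∅ = A := symmDiff_bot A

lemma pr_pair {e f : Sym2 V} (h : e ≠ f) (x : V) : pr {e, f} x = (if x ∈ e then 1 else 0) + (if x ∈ f then 1 else 0) := by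
  rw [pr_eq, Finset.sum_pair h]

lemma pr_one (e : Sym2 V) (x : V) : pr {e} x = if x ∈ e then 1 else 0 := by
  rw [pr_eq, Finset.sum_singleton]

lemma pr_dg1 {Z : Finset (Sym2 V)} {e : Sym2 V} {x : V} (he : e ∈ Z) (hx : x ∈ e) (h : ∀ f ∈ Z, x ∈ f → f = e) : pr Z x = 1 := by
  rw [pr_eq, Finset.sum_eq_single e]
  · simp [hx]
  · intro b hb hbe; rw [if_neg]; intro hxb; exact hbe (h b hb hxb)
  · intro h; exact absurd he h

lemma acyc_insert {F : Finset (Sym2 V)} (hF : Acyc F) {e : Sym2 V} {u : V} (hu : u ∈ e) (h0 : dg F u = 0) : Acyc (insert e F) := by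
  intro Z hZ hz
  rw [dg_z] at h0
  by_cases he : e ∈ Z
  · have := pr_dg1 he hu (by
      intro f hf huf
      rcases mem_insert.1 (hZ hf) with h | h
      · exact h
      · exact absurd huf (h0 f h))
    rw [hz] at this; simp at this
  · apply hF Z _ hz
    intro f hf
    rcases mem_insert.1 (hZ hf) with h | h
    · subst h; exact absurd hf he
    · exact h

lemma OS4 {S R : Finset (Sym2 V)} {v : V} (hv : pr S v + pr R v = 1)
    (hR : ∀ x, x ≠ v → (∃ e ∈ R, x ∈ e) → s(v,x) ∉ S ∧ pr R x = 1 ∨ s(v,x) ∈ S ∧ (s(v,x) ∈ R) ∧ ∀ e ∈ R, v ∈ e) :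
    OS (ato S v ∆ R ∆ ∅) := by
  rw [sde]
  intro x hx
  by_cases hxv : x = v
  · subst hxv; rw [pr_symm, pr_ato_self, hv]
  · rw [pr_symm, pr_ato hxv]
    by_cases hxR : ∃ e ∈ R, x ∈ e
    · rcases hR x hxv hxR with ⟨h1, h2⟩ | ⟨h1, h2, h3⟩
      · rw [h2, if_neg h1, zero_add]
      · exfalso; apply hx; rw [dg_z]; intro e he hxe
        rw [mem_symmDiff, mem_ato] at he
        have hve : v ∈ e := by
          rcases he with h | h
          · exact h.1.2
          · exact h3 e h.1
        have : e = s(v,x) := (Sym2.mem_and_mem_iff (Ne.symm hxv)).1 ⟨hve, hxe⟩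
        subst this
        have : v ∈ s(v,x) := by simp
        tauto
    · push Not at hxR
      rw [pr_z hxR, add_zero]
      obtain ⟨e, he, hxe⟩ := dg_ne.1 hx
      have h1 := hxR e
      rw [mem_symmDiff, mem_ato] at he
      have hve : e ∈ S ∧ v ∈ e := by tauto
      have : e = s(v,x) := (Sym2.mem_and_mem_iff (Ne.symm hxv)).1 ⟨hve.2, hxe⟩
      subst this
      rw [if_pos hve.1]

lemma cyc {F : Finset (Sym2 V)} (hF : Acyc F) {v y z : V} (hv : ∀ e ∈ F, v ∉ e) (hyv : y ≠ v) (hzv : z ≠ v) (hyz : y ≠ z)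
    (hn : ¬ Acyc (F ∪ {s(v,y), s(v,z)})) : ∃ P ⊆ F, ∀ x, pr P x = pr {s(y,z)} x := by
  unfold Acyc at hn
  push Not at hn
  obtain ⟨Z, hZ, hz, hne⟩ := hn
  have hne' : s(v,y) ≠ s(v,z) := by
    intro h; rw [Sym2.eq_iff] at h; rcases h with ⟨_, h⟩ | ⟨h, _⟩
    · exact hyz h
    · exact hzv h.symm
  have hmem : ∀ e ∈ Z, e ∈ F ∨ e = s(v,y) ∨ e = s(v,z) := by
    intro e he; have := hZ he
    simp only [mem_union, mem_insert, mem_singleton] at this; exact this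
  have hor : s(v,y) ∈ Z ∨ s(v,z) ∈ Z := by
    by_contra hcon
    push Not at hcon
    refine (Finset.nonempty_iff_ne_empty.1 hne) (hF Z (fun e he => ?_) hz)
    rcases hmem e he with h | rfl | rfl
    · exact h
    · exact absurd he hcon.1
    · exact absurd he hcon.2
  have hb : s(v,y) ∈ Z ∧ s(v,z) ∈ Z := by
    by_contra hcon
    have h0 := hz v
    by_cases hy : s(v,y) ∈ Z
    · have := pr_dg1 hy (x := v) (by simp) (by
        intro f hf hvf
        rcases hmem f hf with h | rfl | rfl
        · exact absurd hvf (hv f h)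
        · rfl
        · tauto)
      rw [h0] at this; simp at this
    · have := pr_dg1 (hor.resolve_left hy) (x := v) (by simp) (by
        intro f hf hvf
        rcases hmem f hf with h | rfl | rfl
        · exact absurd hvf (hv f h)
        · tauto
        · rfl)
      rw [h0] at this; simp at this
  refine ⟨Z ∆ {s(v,y), s(v,z)}, ?_, ?_⟩
  · intro e he
    rw [mem_symmDiff] at he
    simp only [mem_insert, mem_singleton] at he
    rcases he with ⟨h1, h2⟩ | ⟨h1 | h1, h2⟩
    · exact (hmem e h1).resolve_right h2
    · subst h1; exact absurd hb.1 h2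
    · subst h1; exact absurd hb.2 h2
  · intro x
    rw [pr_symm, hz, zero_add, pr_pair hne', pr_one]
    simp only [Sym2.mem_iff]
    by_cases h1 : x = v <;> by_cases h2 : x = y <;> by_cases h3 : x = z <;> simp_all <;> first | rfl | decide

section odd
variable {S D : Finset (Sym2 V)} (h : Ctx S D) (hn : Odd (Fintype.card V)) (hg : ¬ Good S D) 

lemma nl (h : Ctx S D) {a b : V} (hab : s(a,b) ∈ D) : a ≠ b := by
  rintro rfl; exact h.nd a (mem_union_right _ hab)
lemma nlS (h : Ctx S D) {a b : V} (hab : s(a,b) ∈ S) : a ≠ b := by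
  rintro rfl; exact h.nd a (mem_union_left _ hab)

lemma OS4_0 {v : V} (hv : pr S v = 1) : OS (ato S v ∆ ∅ ∆ ∅) :=
  OS4 (by rw [hv, pr_empty, add_zero]) (by simp)

lemma OS4_2 (h : Ctx S D) {v y s : V} (hv : pr S v = 1) (hy : s(v,y) ∈ D) (hs : s(v,s) ∈ S) :
    OS (ato S v ∆ {s(v,y), s(v,s)} ∆ ∅) := by
  have hne : s(v,y) ≠ s(v,s) := by intro he; rw [he] at hy; exact h.disj _ hs hy
  apply OS4
  · rw [pr_pair hne, hv]; simp; decide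
  · intro x hx hh
    simp only [mem_insert, mem_singleton, exists_eq_or_imp, exists_eq_left, Sym2.mem_iff, hx, false_or] at hh
    rcases hh with rfl | rfl
    · left
      refine ⟨fun hh => h.disj _ hh hy, ?_⟩
      rw [pr_pair hne]
      have : x ≠ s := by rintro rfl; exact hne rfl
      simp [hx, this]
    · right
      refine ⟨hs, by simp, ?_⟩
      simp

lemma ne_ds (h : Ctx S D) {v y s : V} (hy : s(v,y) ∈ D) (hs : s(v,s) ∈ S) : y ≠ s := by
  rintro rfl; exact h.disj _ hs hy

lemma ne_ds' (h : Ctx S D) {v y s : V} (hy : s(v,y) ∈ D) (hs : s(v,s) ∈ S) : s(v,y) ≠ s(v,s) := by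
  intro he; rw [he] at hy; exact h.disj _ hs hy

lemma hR_2 {v y s : V} (hy : s(v,y) ∈ D) (hs : s(v,s) ∈ S) : ∀ e ∈ ({s(v,y), s(v,s)} : Finset (Sym2 V)), e ∈ S ∪ D ∧ v ∈ e := by
  intro e he
  rw [mem_insert, mem_singleton] at he
  rcases he with rfl | rfl
  · exact ⟨mem_union_right _ hy, by simp⟩
  · exact ⟨mem_union_left _ hs, by simp⟩

lemma exS {v : V} (hv : pr S v = 1) : ∃ s, s(v,s) ∈ S := by
  obtain ⟨e, he, hve⟩ := dg_ne.1 (dg_ne_of_pr hv)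
  obtain ⟨u, rfl⟩ := mem_exists hve
  exact ⟨u, he⟩

lemma odd1 (h : Ctx S D) (hn : Odd (Fintype.card V)) (hg : ¬ Good S D) {v : V} (hv : pr S v = 1) : ∃ y, s(v,y) ∈ D := by
  by_contra hcon
  push Not at hcon
  obtain ⟨F, hF, hp, hac, hm⟩ := stdjoin h hn hg v ∅ (by simp)
  apply hg
  refine CLE h v F ∅ ∅ hF (by simp) (by simp) (by simp) (by simpa using hac) hp (OS4_0 hv) ?_
  intro u hu; exact absurd hu (hcon u)

lemma prF {v : V} {F : Finset (Sym2 V)} (hp : ∀ x, x ≠ v → pr F x = 1 + pr (off S v) x + pr ∅ x) {x : V} (hx : x ≠ v) :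
    pr F x = 1 + pr S x + if s(v,x) ∈ S then 1 else 0 := by
  rw [hp x hx, pr_off hx, pr_empty]; ring

lemma odd2 (h : Ctx S D) (hn : Odd (Fintype.card V)) (hg : ¬ Good S D) {v : V} (hv : pr S v = 1) : ∀ u, s(v,u) ∈ D → pr S u = 0 := by
  by_contra hcon
  push Not at hcon
  obtain ⟨u1, hu1, hu1'⟩ := hcon
  have hu1' : pr S u1 = 1 := (z2 _).resolve_left hu1'
  obtain ⟨F, hF, hp, hac, hm⟩ := stdjoin h hn hg v ∅ (by simp)
  have hpv : ∀ e ∈ F, v ∉ e := fun e he => (hF e he).2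
  have hdv : dg F v = 0 := dg_z.2 hpv
  set U := univ.filter (fun u => s(v,u) ∈ D ∧ pr S u = 1) with hU
  have hmU : ∀ u, u ∈ U ↔ s(v,u) ∈ D ∧ pr S u = 1 := by intro u; simp [hU]
  have hprF : ∀ u, s(v,u) ∈ D → pr F u = 1 + pr S u := by
    intro u hu
    rw [prF hp (nl h hu).symm, if_neg (fun hh => h.disj _ hh hu), add_zero]
  have hFU : ∀ u ∈ U, pr F u = 0 := by
    intro u hu; rw [hmU] at hu; rw [hprF u hu.1, hu.2]; decide
  have hFU' : ∀ u, s(v,u) ∈ D → u ∉ U → dg F u ≠ 0 := by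
    intro u hu hn
    apply dg_ne_of_pr
    rw [hprF u hu, (z2 (pr S u)).resolve_right (fun hh => hn ((hmU u).2 ⟨hu, hh⟩)), add_zero]
  rcases Nat.even_or_odd U.card with hev | hod
  · by_cases hex : ∃ u0 ∈ U, dg F u0 ≠ 0
    · obtain ⟨u0, hu0, hd0⟩ := hex
      apply hg
      refine CLP h v F ∅ ∅ (U.erase u0) hF (by simp) (by simp) ?_ ?_ ?_ (by simp) (by simpa using hac) (by rw [union_empty]; exact pr_of_dg hdv) hp (OS4_0 hv) ?_
      · rw [card_erase_of_mem hu0]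
        exact Nat.Even.sub_odd (Finset.card_pos.2 ⟨_, hu0⟩) hev odd_one
      · intro u hu; exact ⟨((hmU u).1 (mem_of_mem_erase hu)).1, by simp⟩
      · intro u hu; rw [union_empty]; exact hFU u (mem_of_mem_erase hu)
      · intro u hu _ huP
        left; rw [union_empty]
        by_cases h0 : u = u0
        · rw [h0]; exact hd0
        · exact hFU' u hu (fun hh => huP (mem_erase.2 ⟨h0, hh⟩))
    · push Not at hex
      have hu0 : u1 ∈ U := (hmU u1).2 ⟨hu1, hu1'⟩
      obtain ⟨s, hs⟩ := exS hv
      have hne := ne_ds' h hu1 hs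
      have hacL : Acyc (F ∪ {s(v,u1), s(v,s)}) := by
        have e1 : F ∪ {s(v,u1), s(v,s)} = insert s(v,u1) (insert s(v,s) F) := by ext e; simp only [mem_union, mem_insert, mem_singleton]; tauto
        rw [e1]
        apply acyc_insert (u := u1) _ (by simp)
        · rw [dg_z]; intro e he
          rcases mem_insert.1 he with rfl | he
          · rw [Sym2.mem_iff]; rintro (hh | hh)
            · exact nl h hu1 hh.symm
            · exact ne_ds h hu1 hs hh
          · exact dg_z.1 (hex u1 hu0) e he
        · exact acyc_insert hac (u := v) (by simp) hdv
      have hdj : Disjoint F {s(v,u1), s(v,s)} := by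
        rw [Finset.disjoint_left]; intro e he hh
        exact (hF e he).2 (hR_2 hu1 hs e hh).2
      apply hg
      refine CLP h v F ∅ {s(v,u1), s(v,s)} (U.erase u1) hF (by simp) (hR_2 hu1 hs) ?_ ?_ ?_ (by simp) hacL ?_ hp (OS4_2 h hv hu1 hs) ?_
      · rw [card_erase_of_mem hu0]
        exact Nat.Even.sub_odd (Finset.card_pos.2 ⟨_, hu0⟩) hev odd_one
      · intro u hu
        have hu' := (hmU u).1 (mem_of_mem_erase hu)
        refine ⟨hu'.1, ?_⟩
        rw [mem_insert, mem_singleton]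
        rintro (hh | hh)
        · exact (mem_erase.1 hu).1 (Sym2.congr_right.1 hh)
        · exact ne_ds' h hu'.1 hs hh
      · intro u hu
        have hu' := (hmU u).1 (mem_of_mem_erase hu)
        rw [pr_union hdj, hFU u (mem_of_mem_erase hu), pr_pair hne]
        have := (nl h hu'.1).symm
        have := (mem_erase.1 hu).1
        have := ne_ds h hu'.1 hs
        simp [*]
      · rw [pr_union hdj, pr_of_dg hdv, pr_pair hne]; simp; decide
      · intro u hu huR huP
        left; rw [dg_union hdj]
        have h0 : u ≠ u1 := by rintro rfl; simp at huR
        have := hFU' u hu (fun hh => huP (mem_erase.2 ⟨h0, hh⟩))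
        omega
  · apply hg
    refine CLP h v F ∅ ∅ U hF (by simp) (by simp) hod ?_ ?_ (by simp) (by simpa using hac) (by rw [union_empty]; exact pr_of_dg hdv) hp (OS4_0 hv) ?_
    · intro u hu; exact ⟨((hmU u).1 hu).1, by simp⟩
    · intro u hu; rw [union_empty]; exact hFU u hu
    · intro u hu _ huP
      left; rw [union_empty]
      exact hFU' u hu huP

lemma odd3a (h : Ctx S D) (hn : Odd (Fintype.card V)) (hg : ¬ Good S D) {v y z : V} (hv : pr S v = 1) (hy : s(v,y) ∈ D)
    (hz : s(y,z) ∈ D) (hzv : z ≠ v) : s(v,z) ∈ S := by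
  by_contra hzS
  have hyv := (nl h hy).symm
  have hyz := nl h hz
  have hXm : ∀ e ∈ ({s(y,z)} : Finset (Sym2 V)), e ∈ S ∪ D ∧ v ∉ e := by
    intro e he; rw [mem_singleton] at he; subst he
    refine ⟨mem_union_right _ hz, ?_⟩
    rw [Sym2.mem_iff]; rintro (hh | hh)
    · exact hyv hh.symm
    · exact hzv hh.symm
  obtain ⟨F, hF, hp, hac, hm⟩ := stdjoin h hn hg v {s(y,z)} (fun e he => mem_off.2 (hXm e he))
  have hU := odd2 h hn hg hv
  have hdv : dg F v = 0 := dg_z.2 (fun e he => (hF e he).2)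
  have hprF : ∀ u, s(v,u) ∈ D → pr F u = 1 + pr {s(y,z)} u := by
    intro u hu
    rw [hp u (nl h hu).symm, pr_off (nl h hu).symm, hU u hu, if_neg (fun hh => h.disj _ hh hu), add_zero, add_zero]
  have hpr4v : pr (ato S v ∆ ∅ ∆ {s(y,z)}) v = 1 := by
    rw [sde, pr_symm, pr_ato_self, hv, pr_one, if_neg (hXm _ (by simp)).2, add_zero]
  have hpr4 : ∀ x, x ≠ v → pr (ato S v ∆ ∅ ∆ {s(y,z)}) x = (if s(v,x) ∈ S then 1 else 0) + if x = y ∨ x = z then 1 else 0 := by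
    intro x hx; rw [sde, pr_symm, pr_ato hx, pr_single]
  have hyS : s(v,y) ∉ S := fun hh => h.disj _ hh hy
  apply hg
  refine CLP h v F {s(y,z)} ∅ {y} hF hXm (by simp) (by simp) ?_ ?_ ?_ (by simpa using hac) (by rw [union_empty]; exact pr_of_dg hdv) hp ?_ ?_
  · intro u hu; rw [mem_singleton] at hu; subst hu; exact ⟨hy, by simp⟩
  · intro u hu; rw [mem_singleton] at hu; subst hu
    rw [union_empty, hprF u hy, pr_single]; simp; decide
  · intro e _ he; rw [mem_singleton] at he; subst he; exact fun hh => h.disj _ hh hz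
  · intro x hx
    by_cases hxv : x = v
    · rw [hxv]; exact hpr4v
    · rw [hpr4 x hxv]
      by_cases hxy : x = y ∨ x = z
      · rw [if_pos hxy, if_neg, zero_add]
        rcases hxy with rfl | rfl
        · exact hyS
        · exact hzS
      · rw [if_neg hxy, add_zero, if_pos]
        obtain ⟨e, he, hxe⟩ := dg_ne.1 hx
        rw [sde, mem_symmDiff, mem_ato, mem_singleton] at he
        rcases he with ⟨⟨h1, h2⟩, h3⟩ | ⟨h1, h2⟩
        · have : e = s(v,x) := (Sym2.mem_and_mem_iff (Ne.symm hxv)).1 ⟨h2, hxe⟩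
          rw [← this]; exact h1
        · subst h1; rw [Sym2.mem_iff] at hxe; exact absurd hxe hxy
  · intro u hu _ huP
    rw [mem_singleton] at huP
    by_cases huz : u = z
    · right
      refine ⟨dg_ne_of_pr hpr4v, dg_ne_of_pr ?_⟩
      rw [huz, hpr4 z hzv, if_neg hzS]; simp
    · left; rw [union_empty]; apply dg_ne_of_pr
      rw [hprF u hu, pr_single]; simp [huP, huz]

lemma odd3b (h : Ctx S D) (hn : Odd (Fintype.card V)) (hg : ¬ Good S D) {v y : V} (hv : pr S v = 1) (hy : s(v,y) ∈ D) :
    ∃ z, s(y,z) ∈ D ∧ z ≠ v := by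
  by_contra hcon
  push Not at hcon
  have hyS := odd2 h hn hg hv y hy
  obtain ⟨F, hF, hp, hac, hm⟩ := stdjoin h hn hg y ∅ (by simp)
  have hdv : dg F y = 0 := dg_z.2 (fun e he => (hF e he).2)
  have hy' : s(y,v) ∈ D := by rwa [Sym2.eq_swap]
  apply hg
  refine CLE h y F ∅ {s(y,v)} hF (by simp) ?_ (by simp) ?_ hp ?_ ?_
  · intro e he; rw [mem_singleton] at he; subst he; exact ⟨mem_union_right _ hy', by simp⟩
  · rw [union_comm, ← insert_eq]; exact acyc_insert hac (u := y) (by simp) hdv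
  · apply OS4
    · rw [hyS, pr_one]; simp
    · intro x hx hh
      simp [hx] at hh; subst hh
      left
      exact ⟨fun hh => h.disj _ hh hy', by rw [pr_one]; simp⟩
  · intro u hu huR
    have := hcon u hu
    subst this; simp at huR

/-- generic 4c -/
lemma odd4c (h : Ctx S D) (hn : Odd (Fintype.card V)) (hg : ¬ Good S D) {v : V} (hv : pr S v = 1) {F : Finset (Sym2 V)}
    (hF : ∀ e ∈ F, e ∈ S ∪ D ∧ v ∉ e) (hp : ∀ x, x ≠ v → pr F x = 1 + pr (off S v) x + pr ∅ x)
    {y s : V} (hy : s(v,y) ∈ D) (hs : s(v,s) ∈ S) : ¬ Acyc (F ∪ {s(v,y), s(v,s)}) := by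
  intro hac
  have hne := ne_ds' h hy hs
  have hdj : Disjoint F {s(v,y), s(v,s)} := by
    rw [Finset.disjoint_left]; intro e he hh
    exact (hF e he).2 (hR_2 hy hs e hh).2
  have hdv : dg F v = 0 := dg_z.2 (fun e he => (hF e he).2)
  apply hg
  refine CLE h v F ∅ {s(v,y), s(v,s)} hF (by simp) (hR_2 hy hs) (by simp) hac hp (OS4_2 h hv hy hs) ?_
  intro u hu huR
  left
  refine ⟨dg_ne.2 ⟨s(v,y), by simp, by simp⟩, ?_, ?_⟩
  · rw [pr_union hdj, pr_of_dg hdv, pr_pair hne]; simp; decide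
  · have : dg F u ≠ 0 := by
      apply dg_ne_of_pr
      rw [prF hp (nl h hu).symm, odd2 h hn hg hv u hu, if_neg (fun hh => h.disj _ hh hu)]; simp
    rw [dg_union hdj]; omega

end odd
end OddCol

set_option linter.unusedSectionVars false
set_option linter.all false
namespace OddCol
open Finset
open scoped symmDiff
variable {V : Type*} [Fintype V] [DecidableEq V]
section odd
variable {S D : Finset (Sym2 V)}

lemma odd4s (h : Ctx S D) (hn : Odd (Fintype.card V)) (hg : ¬ Good S D) {v : V} (hv : pr S v = 1) {F : Finset (Sym2 V)}
    (hF : ∀ e ∈ F, e ∈ S ∪ D ∧ v ∉ e) (hp : ∀ x, x ≠ v → pr F x = 1 + pr (off S v) x + pr ∅ x)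
    {y z : V} (hy : s(v,y) ∈ D) (hz : s(v,z) ∈ S) (hyz : s(y,z) ∈ F)
    {p q : V} (hpq : p = y ∧ q = z ∨ p = z ∧ q = y)
    {A B : Finset (Sym2 V)} (hAB : A ∪ B = F.erase s(y,z)) (hd : Disjoint A B)
    (hA : pr A p = 1) (hB : pr B p = 1 ∨ dg B p = 0) (hqA : pr A q = 0) (hqB : pr B q = 0)
    (oA : ∀ x, x ≠ p → x ≠ q → dg A x ≠ 0 → pr A x = 1) (oB : ∀ x, x ≠ p → x ≠ q → dg B x ≠ 0 → pr B x = 1) : False := by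
  have hne0 := ne_ds h hy hz
  have hyv := (nl h hy).symm
  have hzv := (nlS h hz).symm
  have hpq' : p ≠ q := by rcases hpq with ⟨rfl, rfl⟩ | ⟨rfl, rfl⟩ <;> [exact hne0; exact hne0.symm]
  have hpv : p ≠ v := by rcases hpq with ⟨rfl, rfl⟩ | ⟨rfl, rfl⟩ <;> assumption
  have hqv : q ≠ v := by rcases hpq with ⟨rfl, rfl⟩ | ⟨rfl, rfl⟩ <;> assumption
  have hyzpq : s(y,z) = s(p,q) := by
    rcases hpq with ⟨rfl, rfl⟩ | ⟨rfl, rfl⟩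
    · rfl
    · rw [Sym2.eq_swap]
  have hm : ∀ e, (e ∈ A ∨ e ∈ B) ↔ (e ≠ s(y,z) ∧ e ∈ F) := by
    intro e; rw [← mem_union, hAB, mem_erase]
  have hvA : ∀ e ∈ A, v ∉ e := fun e he => (hF e ((hm e).1 (Or.inl he)).2).2
  have hvB : ∀ e ∈ B, v ∉ e := fun e he => (hF e ((hm e).1 (Or.inr he)).2).2
  have hRpq : ({s(v,y), s(v,z)} : Finset (Sym2 V)) = {s(v,p), s(v,q)} := by
    rcases hpq with ⟨rfl, rfl⟩ | ⟨rfl, rfl⟩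
    · rfl
    · rw [pair_comm]
  have hne1 : s(p,q) ≠ s(v,p) := by
    intro he
    have : v ∈ s(p,q) := by rw [he]; simp
    rw [Sym2.mem_iff] at this; tauto
  have hd2 : Disjoint A {s(p,q), s(v,p)} := by
    rw [Finset.disjoint_right]; intro e he heA
    rw [mem_insert, mem_singleton] at he
    rcases he with rfl | rfl
    · exact ((hm _).1 (Or.inl heA)).1 hyzpq.symm
    · exact hvA _ heA (by simp)
  have hd3 : Disjoint B {s(v,q)} := by
    rw [Finset.disjoint_right]; intro e he heA
    rw [mem_singleton] at he
    subst he
    exact hvB _ heA (by simp)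
  have hvm : ∀ u, v ∈ s(v,u) := by simp
  apply hg
  refine CL h v F ∅ {s(v,y), s(v,z)} ∅ (A ∪ {s(p,q), s(v,p)}) (B ∪ {s(v,q)}) hF (by simp) (hR_2 hy hz) (by simp) (by simp) ?_ ?_ hp ?_ ?_ (OS4_2 h hv hy hz) ?_
  · intro e
    simp only [mem_union, mem_insert, mem_singleton, notMem_empty, iff_false]
    rintro ⟨h1 | h1 | h1, h2 | h2⟩
    · exact Finset.disjoint_left.1 hd h1 h2
    · subst h2; exact hvA _ h1 (by simp)
    · subst h1; exact ((hm _).1 (Or.inr h2)).1 hyzpq.symm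
    · subst h1
      have : v ∈ s(p,q) := by rw [h2]; simp
      rw [Sym2.mem_iff] at this; tauto
    · subst h1; exact hvB _ h2 (by simp)
    · subst h1; exact hpq' (Sym2.congr_right.1 h2)
  · intro e
    have h1 := hm e
    rw [hRpq]
    simp only [mem_union, mem_insert, mem_singleton, notMem_empty, or_false]
    have h2 : e = s(p,q) → e ∈ F := by rintro rfl; rwa [← hyzpq]
    rw [hyzpq] at h1
    clear * - h1 h2
    tauto
  · intro x hx
    rw [pr_union hd2, pr_pair hne1]
    rw [dg_union hd2] at hx
    by_cases hxv : x = v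
    · subst hxv; rw [pr_z hvA]; simp [hpv.symm, hqv.symm]
    · by_cases hxp : x = p
      · subst hxp; rw [hA]; simp; decide
      · by_cases hxq : x = q
        · subst hxq; rw [hqA]; simp [hxp, hxv]
        · have h0 : dg ({s(p,q), s(v,p)} : Finset (Sym2 V)) x = 0 := by
            rw [dg_z]; simp [hxp, hxq, hxv]
          rw [oA x hxp hxq (by omega)]; simp [hxp, hxq, hxv]
  · intro x hx
    rw [pr_union hd3, pr_one]
    rw [dg_union hd3] at hx
    by_cases hxv : x = v
    · subst hxv; rw [pr_z hvB]; simp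
    · by_cases hxq : x = q
      · subst hxq; rw [hqB]; simp
      · have h0 : dg ({s(v,q)} : Finset (Sym2 V)) x = 0 := by
          rw [dg_z]; simp [hxq, hxv]
        have h1 : dg B x ≠ 0 := by omega
        have h2 : pr B x = 1 := by
          by_cases hxp : x = p
          · subst hxp; exact hB.resolve_right h1
          · exact oB x hxp hxq h1
        rw [h2]; simp [hxq, hxv]
  · intro u hu huR _
    have hv2 : dg (A ∪ {s(p,q), s(v,p)}) v ≠ 0 := dg_ne.2 ⟨s(v,p), by simp, by simp⟩
    have hv3 : dg (B ∪ {s(v,q)}) v ≠ 0 := dg_ne.2 ⟨s(v,q), by simp, by simp⟩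
    have hF1 : pr F u = 1 := by
      rw [prF hp (nl h hu).symm, odd2 h hn hg hv u hu, if_neg (fun hh => h.disj _ hh hu)]; simp
    obtain ⟨e, he, hue⟩ := dg_ne.1 (dg_ne_of_pr hF1)
    by_cases hee : e = s(y,z)
    · left; exact ⟨hv2, dg_ne.2 ⟨e, by simp [hee, hyzpq], hue⟩⟩
    · rcases (hm e).2 ⟨hee, he⟩ with h1 | h1
      · left; exact ⟨hv2, dg_ne.2 ⟨e, mem_union_left _ h1, hue⟩⟩
      · right; left; exact ⟨hv3, dg_ne.2 ⟨e, mem_union_left _ h1, hue⟩⟩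

/-- uniqueness from a pendant edge -/
lemma pend {F P : Finset (Sym2 V)} {y z w : V} (hP : P ⊆ F) (hyz : s(y,z) ∈ F) (hy : ∀ e ∈ F, y ∈ e → e = s(y,z))
    (hz : ∀ e ∈ F, z ∈ e → e = s(y,z)) (hwy : w ≠ y) (hyz' : y ≠ z) (hpr : ∀ x, pr P x = pr {s(z,w)} x) : False := by
  have h1 : pr P z = 1 := by rw [hpr, pr_one]; simp
  obtain ⟨e, he, hze⟩ := dg_ne.1 (dg_ne_of_pr h1)
  have := hz e (hP he) hze
  subst this
  have h2 := pr_dg1 (x := y) he (by simp) (fun f hf hyf => hy f (hP hf) hyf)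
  rw [hpr, pr_one] at h2
  simp [hyz', hwy.symm] at h2

lemma pr_er {F : Finset (Sym2 V)} {e : Sym2 V} (he : e ∈ F) {x : V} (hx : x ∈ e) : pr (F.erase e) x = pr F x + 1 := by
  have h1 : pr F x = pr (insert e (F.erase e)) x := by rw [insert_erase he]
  rw [h1, insert_eq, pr_union (by simp), pr_one, if_pos hx]
  linear_combination - z2a (1 : ZMod 2)

lemma uniq_er {F : Finset (Sym2 V)} {e : Sym2 V} {x : V} (h : dg (F.erase e) x = 0) : ∀ f ∈ F, x ∈ f → f = e := by
  intro f hf hx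
  by_contra hne
  exact dg_z.1 h f (mem_erase.2 ⟨hne, hf⟩) hx

lemma odd4 (h : Ctx S D) (hn : Odd (Fintype.card V)) (hg : ¬ Good S D) {v : V} (hv : pr S v = 1) :
    ∃ y z, s(v,y) ∈ D ∧ s(v,z) ∈ S ∧ s(y,z) ∈ D ∧ (∀ u, s(v,u) ∈ D → u = y) ∧ (∀ u, s(v,u) ∈ S → u = z) ∧ 
      pr S y = 0 ∧ pr S z = 1 ∧ (∀ u, s(y,u) ∈ D → u = v ∨ u = z) := by
  obtain ⟨y, hy⟩ := odd1 h hn hg hv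
  obtain ⟨z, hyz, hzv⟩ := odd3b h hn hg hv hy
  have hz := odd3a h hn hg hv hy hyz hzv
  have hyv := (nl h hy).symm
  have hyz' := nl h hyz
  have hSy := odd2 h hn hg hv y hy
  obtain ⟨F, hF, hp, hac, hm⟩ := stdjoin h hn hg v ∅ (by simp)
  have hFv : ∀ e ∈ F, v ∉ e := fun e he => (hF e he).2
  have hndF : ND F := fun a ha => h.nd a (hF _ ha).1
  -- the edge yz lies in F
  have hyzF : s(y,z) ∈ F := by
    by_contra hnF
    obtain ⟨P, hP, hpr⟩ := cyc hac hFv hyv hzv hyz' (odd4c h hn hg hv hF hp hy hz)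
    have hle := hm (insert s(y,z) (F \ P)) (by
      intro e he
      rcases mem_insert.1 he with rfl | he
      · refine ⟨mem_union_right _ hyz, ?_⟩
        rw [Sym2.mem_iff]; tauto
      · exact hF e (mem_sdiff.1 he).1) (by
      intro x hx
      rw [← hp x hx, insert_eq, pr_union (by simp [hnF])]
      have e1 : pr F x = pr (F \ P) x + pr P x := by
        rw [← pr_union sdiff_disjoint, sdiff_union_of_subset hP]
      rw [e1, hpr, add_comm])
    rw [card_insert_of_notMem (by simp [hnF]), card_sdiff_of_subset hP] at hle
    have hc := card_le_card hP
    have h1 : pr P y = 1 := by rw [hpr, pr_one]; simp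
    have h2 : pr P z = 1 := by rw [hpr, pr_one]; simp
    obtain ⟨e, he, hye⟩ := dg_ne.1 (dg_ne_of_pr h1)
    obtain ⟨f, hf, hzf⟩ := dg_ne.1 (dg_ne_of_pr h2)
    have hP1 : P.card ≤ 1 := by omega
    have := card_le_one.1 hP1 e he f hf
    subst this
    have : e = s(y,z) := (Sym2.mem_and_mem_iff hyz').1 ⟨hye, hzf⟩
    subst this; exact hnF (hP he)
  set F0 := F.erase s(y,z) with hF0
  have hnd0 : ND F0 := fun a ha => hndF a (mem_of_mem_erase ha)
  have hac0 : Acyc F0 := hac.mono (erase_subset _ _)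
  have hpy : pr F0 y = 0 := by
    rw [hF0, pr_er hyzF (by simp), prF hp hyv, hSy, if_neg (fun hh => h.disj _ hh hy)]; decide
  have hdz : dg F0 z = 0 := by
    by_contra hdz
    obtain ⟨A, B, hAB, hd, h1, h2⟩ := twocol hnd0 hac0 (fun x => x ≠ y ∧ pr F0 x = 0) (fun x h => h.2)
    have hpp : ∀ x, pr F0 x = pr A x + pr B x := fun x => by rw [← hAB, pr_union hd]
    have hdd : ∀ x, dg F0 x = dg A x + dg B x := fun x => by rw [← hAB, dg_union hd]
    have hyAB : pr A y = 0 ∧ pr B y = 0 := by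
      have := hpp y
      rw [hpy] at this
      rcases h1 y (by tauto) with h | h
      · rw [pr_of_dg h] at this ⊢; rw [zero_add] at this; exact ⟨rfl, this.symm⟩
      · rw [pr_of_dg h] at this ⊢; rw [add_zero] at this; exact ⟨this.symm, rfl⟩
    have oA : ∀ x, x ≠ y → dg A x ≠ 0 → pr A x = 1 := by
      intro x hxy hx
      by_cases hL : pr F0 x = 0
      · exact (h2 x ⟨hxy, hL⟩ (by have := hdd x; omega)).1
      · have h := (h1 x (by tauto)).resolve_left (by omega)
        have := hpp x; rw [pr_of_dg h, add_zero] at this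
        rw [← this]; exact (z2 _).resolve_left hL
    have oB : ∀ x, x ≠ y → dg B x ≠ 0 → pr B x = 1 := by
      intro x hxy hx
      by_cases hL : pr F0 x = 0
      · exact (h2 x ⟨hxy, hL⟩ (by have := hdd x; omega)).2
      · have h := (h1 x (by tauto)).resolve_right (by omega)
        have := hpp x; rw [pr_of_dg h, zero_add] at this
        rw [← this]; exact (z2 _).resolve_left hL
    by_cases hAz : dg A z = 0
    · refine odd4s h hn hg hv hF hp hy hz hyzF (p := z) (q := y) (A := B) (B := A) (by tauto) (by rw [union_comm]; exact hAB) hd.symm ?_ (Or.inr hAz) hyAB.2 hyAB.1 (fun x _ => oB x) (fun x _ => oA x)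
      exact oB z hyz'.symm (by have := hdd z; omega)
    · refine odd4s h hn hg hv hF hp hy hz hyzF (p := z) (q := y) (A := A) (B := B) (by tauto) hAB hd (oA z hyz'.symm hAz) ?_ hyAB.1 hyAB.2 (fun x _ => oA x) (fun x _ => oB x)
      by_cases hBz : dg B z = 0
      · exact Or.inr hBz
      · exact Or.inl (oB z hyz'.symm hBz)
  have hdy : dg F0 y = 0 := by
    by_contra hdy
    obtain ⟨A, B, hAB, hd, oA, oB, hs⟩ := colE hnd0 hac0
    have hdd : ∀ x, dg F0 x = dg A x + dg B x := fun x => by rw [← hAB, dg_union hd]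
    have h1 := hs y hpy hdy
    have h2 := hdd z
    refine odd4s h hn hg hv hF hp hy hz hyzF (p := y) (q := z) (A := A) (B := B) (by tauto) hAB hd (oA y h1.1) (Or.inl (oB y h1.2)) (pr_of_dg (by omega)) (pr_of_dg (by omega)) (fun x _ _ => oA x) (fun x _ _ => oB x)
  have hy1 := uniq_er hdy
  have hz1 := uniq_er hdz
  have hND : ∀ u, s(v,u) ∈ D → u = y := by
    intro u hu
    by_contra hne
    have huz := ne_ds h hu hz
    obtain ⟨P, hP, hpr⟩ := cyc hac hFv (nl h hu).symm hzv huz (odd4c h hn hg hv hF hp hu hz)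
    exact pend hP hyzF hy1 hz1 hne hyz' (by intro x; rw [hpr, Sym2.eq_swap])
  have hNS : ∀ u, s(v,u) ∈ S → u = z := by
    intro u hu
    by_contra hne
    have huz := ne_ds h hy hu
    obtain ⟨P, hP, hpr⟩ := cyc hac hFv hyv (nlS h hu).symm huz (odd4c h hn hg hv hF hp hy hu)
    have e1 : s(z,y) = s(y,z) := Sym2.eq_swap
    exact pend (y := z) (z := y) (w := u) hP (by rw [e1]; exact hyzF) (by rw [e1]; exact hz1) (by rw [e1]; exact hy1) hne hyz'.symm hpr
  refine ⟨y, z, hy, hz, hyz, hND, hNS, hSy, ?_, ?_⟩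
  · have h1 : pr F0 z = 0 := pr_of_dg hdz
    rw [hF0, pr_er hyzF (by simp), prF hp hzv, if_pos hz] at h1
    revert h1; generalize pr S z = a; revert a; decide
  · intro u hu
    by_cases huv : u = v
    · exact Or.inl huv
    · exact Or.inr (hNS u (odd3a h hn hg hv hy hu huv))

lemma odd5 (h : Ctx S D) (hn : Odd (Fintype.card V)) (hn4 : 4 ≤ Fintype.card V) (hg : ¬ Good S D) (v : V) : pr S v = 0 := by
  rcases z2 (pr S v) with h0 | hv
  · exact h0
  exfalso
  obtain ⟨y, z, hy, hz, hyz, hND, hNS, hSy, hSz, hDy⟩ := odd4 h hn hg hv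
  obtain ⟨y2, z2', hy2, hz2, -, hND2, hNS2, -, -, -⟩ := odd4 h hn hg hSz
  have e1 : y = y2 := hND2 y (by rwa [Sym2.eq_swap])
  have e2 : v = z2' := hNS2 v (by rwa [Sym2.eq_swap])
  subst e1 e2
  have hyv := (nl h hy).symm
  have hzv := (nlS h hz).symm
  have hyz' := nl h hyz
  have hyvD : s(y,v) ∈ D := by rwa [Sym2.eq_swap]
  have hexs : ∃ s, s(y,s) ∈ S ∧ s ≠ v ∧ s ≠ z := by
    by_contra hcon
    push Not at hcon
    have huniv := h.conn {v, y, z} ⟨v, by simp⟩ (by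
      intro a b hab ha
      simp only [mem_insert, mem_singleton] at ha ⊢
      rw [mem_union] at hab
      rcases ha with rfl | rfl | rfl
      · rcases hab with hab | hab
        · exact Or.inr (Or.inr (hNS b hab))
        · exact Or.inr (Or.inl (hND b hab))
      · rcases hab with hab | hab
        · by_cases hb : b = v
          · exact Or.inl hb
          · exact Or.inr (Or.inr (hcon b hab hb))
        · have := hDy b hab; tauto
      · rcases hab with hab | hab
        · exact Or.inl (hNS2 b hab)
        · exact Or.inr (Or.inl (hND2 b hab)))
    have h3 : ({v, y, z} : Finset V).card ≤ 3 := card_le_three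
    rw [huniv, card_univ] at h3
    omega
  obtain ⟨s, hs, hsv, hsz⟩ := hexs
  have hsy := (nlS h hs).symm
  obtain ⟨F, hF, hp, hac, hm⟩ := stdjoin h hn hg y ∅ (by simp)
  have hdy : dg F y = 0 := dg_z.2 (fun e he => (hF e he).2)
  have key : ∀ a b : V, a ≠ y → s(y,a) ∉ S → pr S a = 1 → (∀ u, s(a,u) ∈ S → u = b) → (∀ u, s(a,u) ∈ D → u = y) → dg F a = 0 := by
    intro a b hay haS ha haS' haD
    have h0 : pr F a = 0 := by rw [prF hp hay, ha, if_neg haS]; decide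
    rw [dg_z]
    intro e he hae
    have := pr_dg1 he hae (by
      have aux : ∀ g ∈ F, a ∈ g → g = s(a,b) := by
        intro g hg hag
        obtain ⟨u, rfl⟩ := mem_exists hag
        obtain ⟨h1, h2⟩ := hF _ hg
        rw [mem_union] at h1
        rcases h1 with h1 | h1
        · rw [haS' u h1]
        · have := haD u h1; subst this; simp at h2
      intro g hg hag
      rw [aux g hg hag, aux e he hae])
    rw [h0] at this; simp at this
  have hdv : dg F v = 0 := key v z hyv.symm (fun hh => h.disj _ hh hyvD) hv hNS hND
  have hdz : dg F z = 0 := key z v hyz'.symm (fun hh => h.disj _ hh hyz) hSz hNS2 hND2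
  apply hg
  have hmR : ∀ e, e ∈ ({s(y,z), s(y,v), s(y,s)} : Finset (Sym2 V)) ↔ e = s(y,z) ∨ e = s(y,v) ∨ e = s(y,s) := by intro e; simp
  have hR : ∀ x, pr {s(y,z), s(y,v), s(y,s)} x = (if x ∈ s(y,z) then 1 else 0) + ((if x ∈ s(y,v) then 1 else 0) + (if x ∈ s(y,s) then 1 else 0)) := by
    intro x
    have n1 : s(y,z) ∉ ({s(y,v), s(y,s)} : Finset (Sym2 V)) := by
      simp only [mem_insert, mem_singleton, Sym2.congr_right]; tauto
    have n2 : s(y,v) ≠ s(y,s) := by rw [Ne, Sym2.congr_right]; exact hsv.symm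
    rw [insert_eq, pr_union (by simpa using n1), pr_pair n2, pr_one]
  refine CLE h y F ∅ {s(y,z), s(y,v), s(y,s)} hF (by simp) ?_ (by simp) ?_ hp ?_ ?_
  · intro e he
    rcases (hmR e).1 he with rfl | rfl | rfl
    · exact ⟨mem_union_right _ hyz, by simp⟩
    · exact ⟨mem_union_right _ hyvD, by simp⟩
    · exact ⟨mem_union_left _ hs, by simp⟩
  · have e1 : F ∪ {s(y,z), s(y,v), s(y,s)} = insert s(y,z) (insert s(y,v) (insert s(y,s) F)) := by
      ext e; simp only [mem_union, mem_insert, mem_singleton]; tauto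
    rw [e1]
    rw [dg_z] at hdv hdz
    apply acyc_insert (u := z) _ (by simp)
    · rw [dg_z]; intro e he
      rw [mem_insert, mem_insert] at he
      rcases he with rfl | rfl | he
      · rw [Sym2.mem_iff]; tauto
      · rw [Sym2.mem_iff]; rintro (hh | hh) <;> [exact hyz' hh.symm; exact hsz hh.symm]
      · exact hdz e he
    · apply acyc_insert (u := v) _ (by simp)
      · rw [dg_z]; intro e he
        rw [mem_insert] at he
        rcases he with rfl | he
        · rw [Sym2.mem_iff]; rintro (hh | hh) <;> [exact hyv hh.symm; exact hsv hh.symm]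
        · exact hdv e he
      · exact acyc_insert hac (u := y) (by simp) hdy
  · apply OS4
    · rw [hSy, hR]; simp; decide
    · intro x hx hh
      obtain ⟨e, he, hxe⟩ := hh
      rcases (hmR e).1 he with rfl | rfl | rfl
      · have : x = z := by simpa [hx] using hxe
        subst this; left
        exact ⟨fun hh => h.disj _ hh hyz, by rw [hR]; simp [hx, hzv, hsz.symm]⟩
      · have : x = v := by simpa [hx] using hxe
        subst this; left
        exact ⟨fun hh => h.disj _ hh hyvD, by rw [hR]; simp [hx, hzv.symm, hsv.symm]⟩
      · have : x = s := by simpa [hx] using hxe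
        subst this; right
        refine ⟨hs, by simp, by simp⟩
  · intro u hu huR
    exfalso; apply huR
    rcases hDy u hu with rfl | rfl <;> simp

end odd
end OddCol

set_option linter.unusedSectionVars false
set_option linter.all false
namespace OddCol
open Finset
open scoped symmDiff
variable {V : Type*} [Fintype V] [DecidableEq V]
section eul
variable {S D : Finset (Sym2 V)}

lemma sum_pr_single {a b : V} (hab : a ≠ b) (C : Finset V) :
    ∑ x ∈ C, pr {s(a,b)} x = (if a ∈ C then 1 else 0) + (if b ∈ C then 1 else 0) := by
  have : ∀ x, pr {s(a,b)} x = (if x = a then (1:ZMod 2) else 0) + (if x = b then 1 else 0) := by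
    intro x; rw [pr_single]; by_cases x = a <;> by_cases x = b <;> simp_all
  simp only [this, Finset.sum_add_distrib, Finset.sum_ite_eq']

lemma eul6 (h : Ctx S D) (hn : Odd (Fintype.card V)) (hg : ¬ Good S D) (hE : ∀ x, pr S x = 0) {z u x : V}
    (hz : ∀ u, s(z,u) ∉ S) (hu : s(z,u) ∈ D) (hxz : x ≠ z) (hx : s(z,x) ∉ D) (hux : s(u,x) ∈ S ∪ D) : False := by
  have huz := (nl h hu).symm
  have hux' : u ≠ x := by rintro rfl; exact hx hu
  have hoff : off S z = S := by
    ext e; rw [mem_off]; refine ⟨fun hh => hh.1, fun hh => ⟨hh, fun hze => ?_⟩⟩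
    obtain ⟨w, rfl⟩ := mem_exists hze; exact hz w hh
  have hato : ato S z = ∅ := by
    ext e; rw [mem_ato]; simp only [notMem_empty, iff_false]; rintro ⟨hh, hze⟩
    obtain ⟨w, rfl⟩ := mem_exists hze; exact hz w hh
  have hSz : ∀ e ∈ S, z ∉ e := by intro e he; rw [← hoff, mem_off] at he; exact he.2
  set K := (off (S ∪ D) z).filter (fun e => ¬ (e = s(u,x) ∧ e ∈ S)) with hK
  have hmK : ∀ e, e ∈ K ↔ (e ∈ S ∪ D ∧ z ∉ e) ∧ ¬ (e = s(u,x) ∧ e ∈ S) := by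
    intro e; rw [hK, mem_filter, mem_off]
  have hzux : z ∉ s(u,x) := by rw [Sym2.mem_iff]; tauto
  have hndK : ND K := fun a ha => h.nd a ((hmK _).1 ha).1.1
  have hndS : ND S := fun a ha => h.nd a (mem_union_left _ ha)
  obtain ⟨F, hF, hp, hm⟩ := minjoin K hndK (fun w => if w = z then 0 else 1 + pr {s(u,x)} w) (by
    intro C hC
    have hCK : Closed K (C.erase z) := by
      intro a b hab ha
      rw [mem_erase] at ha ⊢
      refine ⟨?_, hC a b hab ha.2⟩
      rintro rfl
      have := ((hmK _).1 hab).1.2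
      simp at this
    have hC' : Closed (off (S ∪ D) z) (C.erase z) := by
      by_cases huS : s(u,x) ∈ S
      · have h1 := hand (Y := S.erase s(u,x)) (C := C.erase z) (fun a ha => hndS a (mem_of_mem_erase ha)) (by
          intro a b hab ha
          rw [mem_erase] at hab
          exact hCK a b ((hmK _).2 ⟨⟨mem_union_left _ hab.2, hSz _ hab.2⟩, fun hh => hab.1 hh.1⟩) ha)
        have h2 : ∀ w, pr (S.erase s(u,x)) w = pr {s(u,x)} w := by
          intro w
          have h3 : pr S w = pr (insert s(u,x) (S.erase s(u,x))) w := by rw [insert_erase huS]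
          rw [insert_eq, pr_union (by simp), hE] at h3
          revert h3; generalize pr (S.erase s(u,x)) w = p; generalize pr {s(u,x)} w = q; revert p q; decide
        simp only [h2] at h1
        rw [sum_pr_single hux'] at h1
        have hiff : u ∈ C.erase z ↔ x ∈ C.erase z := by
          by_cases a1 : u ∈ C.erase z <;> by_cases a2 : x ∈ C.erase z
          · tauto
          · rw [if_pos a1, if_neg a2] at h1; simp at h1
          · rw [if_neg a1, if_pos a2] at h1; simp at h1
          · tauto
        intro a b hab ha
        by_cases he : s(a,b) = s(u,x)
        · rw [Sym2.eq_iff] at he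
          rcases he with ⟨rfl, rfl⟩ | ⟨rfl, rfl⟩
          · exact hiff.1 ha
          · exact hiff.2 ha
        · exact hCK a b ((hmK _).2 ⟨mem_off.1 hab, fun hh => he hh.1⟩) ha
      · intro a b hab ha
        exact hCK a b ((hmK _).2 ⟨mem_off.1 hab, fun hh => huS (hh.1 ▸ hh.2)⟩) ha
    have e1 : ∑ w ∈ C, (if w = z then 0 else 1 + pr {s(u,x)} w) = ∑ w ∈ C.erase z, (1 + pr {s(u,x)} w) := by
      rw [← Finset.sum_erase C (a := z) (by simp)]
      apply Finset.sum_congr rfl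
      intro x hx; rw [if_neg (mem_erase.1 hx).1]
    rw [e1, Finset.sum_add_distrib, sum_one, T2 h hn hg z _ (by simp) hC', zero_add]
    apply hand
    · intro a ha; rw [mem_singleton] at ha; rw [← ha] at hux; exact h.nd a hux
    · intro a b hab ha
      rw [mem_singleton] at hab
      exact hC' a b (mem_off.2 (by rw [hab]; exact ⟨hux, hzux⟩)) ha)
  have hac := acyc_of_min hF hp hm
  have hdv : pr F z = 0 := by rw [hp, if_pos rfl]
  apply hg
  refine CLP h z F {s(u,x)} ∅ {u} (fun e he => ((hmK e).1 (hF he)).1) ?_ (by simp) (by simp) ?_ ?_ ?_ (by simpa using hac) (by rw [union_empty]; exact hdv) ?_ ?_ ?_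
  · intro e he; rw [mem_singleton] at he; subst he; exact ⟨hux, hzux⟩
  · intro w hw; rw [mem_singleton] at hw; subst hw; exact ⟨hu, by simp⟩
  · intro w hw; rw [mem_singleton] at hw; subst hw
    rw [union_empty, hp, if_neg huz, pr_single]; simp; decide
  · intro e he he2; rw [mem_singleton] at he2
    exact fun hh => ((hmK e).1 (hF he)).2 ⟨he2, hh⟩
  · intro w hw; rw [hp, if_neg hw, hoff, hE, add_zero]
  · rw [sde, hato]
    intro w hw
    have e0 : (∅ : Finset (Sym2 V)) ∆ {s(u,x)} = {s(u,x)} := bot_symmDiff _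
    rw [e0] at hw ⊢
    obtain ⟨e, he, hwe⟩ := dg_ne.1 hw
    rw [mem_singleton] at he; subst he
    rw [pr_one, if_pos hwe]
  · intro w hw _ hwu
    rw [mem_singleton] at hwu
    left; rw [union_empty]; apply dg_ne_of_pr
    have : w ≠ x := by rintro rfl; exact hx hw
    rw [hp, if_neg (nl h hw).symm, pr_single]; simp [hwu, this]

lemma eul6' (h : Ctx S D) (hn : Odd (Fintype.card V)) (hg : ¬ Good S D) (hE : ∀ x, pr S x = 0) {z : V}
    (hz : ∀ u, s(z,u) ∉ S) (x : V) (hxz : x ≠ z) : s(z,x) ∈ D := by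
  have := h.conn (univ.filter (fun x => x = z ∨ s(z,x) ∈ D)) ⟨z, by simp⟩ (by
    intro a b hab ha
    simp only [mem_filter, mem_univ, true_and] at ha ⊢
    rcases ha with rfl | ha
    · rw [mem_union] at hab
      exact Or.inr (hab.resolve_left (hz b))
    · by_contra hcon
      push Not at hcon
      exact eul6 h hn hg hE hz ha hcon.1 hcon.2 hab)
  have hx : x ∈ univ.filter (fun x => x = z ∨ s(z,x) ∈ D) := by rw [this]; simp
  simp only [mem_filter, mem_univ, true_and] at hx
  exact hx.resolve_left hxz

set_option maxHeartbeats 600000 in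
lemma eul7 (h : Ctx S D) (hn : Odd (Fintype.card V)) (hn4 : 4 ≤ Fintype.card V) (hS : S = ∅)
    (hD : ∀ a b, a ≠ b → s(a,b) ∈ D) : Good S D := by
  classical
  obtain ⟨T, hT⟩ : ∃ T : Finset V, T.card = 4 := by
    obtain ⟨T, _, hT⟩ := Finset.exists_subset_card_eq (s := (univ : Finset V)) (n := 4) (by simpa using hn4)
    exact ⟨T, hT⟩
  obtain ⟨v, w, x, y, hvw, hvx, hvy, hwx, hwy, hxy, rfl⟩ := Finset.card_eq_four.1 hT
  have hn5 : 5 ≤ Fintype.card V := by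
    rcases hn4.eq_or_lt with h4 | h4
    · rw [← h4] at hn; exact absurd hn (by decide)
    · exact h4
  set W : Finset V := univ \ {v, w, x} with hW
  have hmW : ∀ u, u ∈ W ↔ u ≠ v ∧ u ≠ w ∧ u ≠ x := by intro u; simp [hW]
  have hWc : W.card = Fintype.card V - 3 := by
    rw [hW, card_sdiff_of_subset (by simp), card_univ, card_eq_three.2 ⟨v, w, x, hvw, hvx, hwx, rfl⟩]
  set M : Finset (Sym2 V) := univ.filter (fun e => ¬ e.IsDiag ∧ ∀ a ∈ e, a ∈ W) with hM
  have hmM : ∀ a b, s(a,b) ∈ M ↔ a ≠ b ∧ a ∈ W ∧ b ∈ W := by intro a b; simp [hM]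
  have hprM : ∀ u ∈ W, pr M u = 1 := by
    intro u hu
    have e1 : ato M u = star u (W.erase u) := by
      ext e; rw [mem_ato, mem_star]
      constructor
      · rintro ⟨h1, h2⟩
        obtain ⟨b, rfl⟩ := mem_exists h2
        rw [hmM] at h1
        exact ⟨b, mem_erase.2 ⟨h1.1.symm, h1.2.2⟩, rfl⟩
      · rintro ⟨b, hb, rfl⟩
        rw [mem_erase] at hb
        exact ⟨(hmM _ _).2 ⟨hb.1.symm, hu, hb.2⟩, by simp⟩
    rw [← pr_ato_self, e1, pr_star_self, card_erase_of_mem hu, hWc, ZMod.natCast_eq_one_iff_odd]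
    obtain ⟨k, hk⟩ := hn
    exact ⟨k - 2, by omega⟩
  have hM0 : ∀ u, u ∉ W → ∀ e ∈ M, u ∉ e := by
    intro u hu e he hue
    obtain ⟨b, rfl⟩ := mem_exists hue
    exact hu ((hmM _ _).1 he).2.1
  have key : ∀ p q, p ∉ W → q ∉ W → p ≠ q → OS ({s(p,q)} ∪ M) ∧ (∀ u, u ∈ W ∨ u = p ∨ u = q → dg ({s(p,q)} ∪ M) u ≠ 0) := by
    intro p q hpW hqW hpq
    have hd : Disjoint {s(p,q)} M := by
      rw [disjoint_singleton_left, hmM]; tauto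
    have hh : ∀ u, u ∈ W ∨ u = p ∨ u = q → pr ({s(p,q)} ∪ M) u = 1 := by
      intro u hu
      rw [pr_union hd, pr_single]
      by_cases huW : u ∈ W
      · have n1 : u ≠ p := by rintro rfl; exact hpW huW
        have n2 : u ≠ q := by rintro rfl; exact hqW huW
        rw [hprM u huW]; simp [n1, n2]
      · rw [pr_z (hM0 u huW), if_pos (hu.resolve_left huW), add_zero]
    refine ⟨?_, fun u hu => dg_ne_of_pr (hh u hu)⟩
    intro u hu
    apply hh
    obtain ⟨e, he, hue⟩ := dg_ne.1 hu
    rw [mem_union, mem_singleton] at he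
    rcases he with rfl | he
    · rw [Sym2.mem_iff] at hue; tauto
    · left; by_contra hcon; exact hM0 u hcon e he hue
  have hvW : v ∉ W := by rw [hmW]; tauto
  have hwW : w ∉ W := by rw [hmW]; tauto
  have hxW : x ∉ W := by rw [hmW]; tauto
  have hyW : y ∈ W := by rw [hmW]; exact ⟨hvy.symm, hwy.symm, hxy.symm⟩
  obtain ⟨o4, s4⟩ := key v x hvW hxW hvx
  obtain ⟨o1, s1⟩ := key w x hwW hxW hwx
  have hst : ∀ u, u = x ∨ u = v ∨ u = w ∨ u = y ↔ u = x ∨ u ∈ ({v, w, y} : Finset V) := by intro u; simp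
  have hxP : x ∉ ({v, w, y} : Finset V) := by simp [hvx.symm, hwx.symm, hxy]
  have hpr2 : ∀ u, u = x ∨ u ∈ ({v, w, y} : Finset V) → pr (star x {v, w, y}) u = 1 := by
    intro u hu
    by_cases hux : u = x
    · rw [hux, pr_star_self, card_eq_three.2 ⟨v, w, y, hvw, hvy, hwy, rfl⟩]; decide
    · rw [pr_star hxP hux, if_pos (hu.resolve_left hux)]
  have o2 : OS (star x {v, w, y}) := by
    intro u hu
    apply hpr2
    obtain ⟨e, he, hue⟩ := dg_ne.1 hu
    obtain ⟨b, hb, rfl⟩ := mem_star.1 he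
    rw [Sym2.mem_iff] at hue
    rcases hue with rfl | rfl <;> tauto
  have o3 : OS ({s(x,y)} : Finset (Sym2 V)) := by
    intro u hu
    obtain ⟨e, he, hue⟩ := dg_ne.1 hu
    rw [mem_singleton] at he; subst he
    rw [pr_one, if_pos hue]
  have hsub : ∀ e : Sym2 V, ¬ e.IsDiag → e ∈ S ∪ D := by
    intro e he
    induction e with | _ a b =>
    exact mem_union_right _ (hD a b (by simpa using he))
  have hm2 : ∀ e, e ∈ star x {v, w, y} ↔ e = s(v,x) ∨ e = s(w,x) ∨ e = s(x,y) := by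
    intro e; rw [mem_star]; simp only [mem_insert, mem_singleton, exists_eq_or_imp, exists_eq_left]
    rw [Sym2.eq_swap (a := x) (b := v), Sym2.eq_swap (a := x) (b := w)]
  refine mkGood ({s(w,x)} ∪ M) (star x {v, w, y}) {s(x,y)} ({s(v,x)} ∪ M) o1 o2 o3 o4 ?_ (by simp [hS]) ?_
  · intro e he
    apply hsub
    simp only [mem_union, mem_singleton, hm2] at he
    have hMd : e ∈ M → ¬ e.IsDiag := by intro hh; simp only [hM, mem_filter] at hh; exact hh.2.1
    rcases he with (rfl | he) | (rfl | rfl | rfl) | rfl | rfl | he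
    all_goals first | exact hMd he | (simp; tauto)
  · intro e he
    have nvx : s(v,x) ∉ M := by rw [hmM]; tauto
    have nwx : s(w,x) ∉ M := by rw [hmM]; tauto
    have nxy : s(x,y) ∉ M := by rw [hmM]; tauto
    have n1 : s(v,x) ≠ s(w,x) := by intro hh; exact hvw (Sym2.congr_left.1 hh)
    have n2 : s(v,x) ≠ s(x,y) := by intro hh; rw [Sym2.eq_iff] at hh; tauto
    have n3 : s(w,x) ≠ s(x,y) := by intro hh; rw [Sym2.eq_iff] at hh; tauto
    simp only [mem_union, mem_singleton, hm2]
    by_cases h1 : e = s(v,x)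
    · subst h1; simp [nvx, n1, n2, n1.symm, n2.symm]
    by_cases h2 : e = s(w,x)
    · subst h2; simp [nwx, n1, n3, n1.symm, n3.symm]
    by_cases h3 : e = s(x,y)
    · subst h3; simp [nxy, n2, n3, n2.symm, n3.symm]
    by_cases h4 : e ∈ M
    · simp [h1, h2, h3, h4]
    right; right; right; right; right; right
    refine ⟨by simp [h1, h2, h3, h4], ?_⟩
    induction e with | _ a b =>
    have hab : a ≠ b := nl h he
    simp only [Sym2.mem_iff, forall_eq_or_imp, forall_eq]
    have hc : ∀ u, u ∈ W ∨ u = v ∨ u = w ∨ u = x := by intro u; rw [hmW]; tauto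
    have s2 : dg (star x {v, w, y}) v ≠ 0 ∧ dg (star x {v, w, y}) w ≠ 0 :=
      ⟨dg_ne_of_pr (hpr2 v (by simp)), dg_ne_of_pr (hpr2 w (by simp))⟩
    rw [hmM] at h4
    have h1' : s(a,b) ≠ s(x,v) := by rw [Sym2.eq_swap (a := x)]; exact h1
    have h2' : s(a,b) ≠ s(x,w) := by rw [Sym2.eq_swap (a := x)]; exact h2
    rcases hc a with ha | rfl | rfl | rfl <;> rcases hc b with hb | rfl | rfl | rfl
    · exact absurd ⟨hab, ha, hb⟩ h4
    · right; right; right; exact ⟨s4 _ (by first | exact Or.inl ha | exact Or.inl hb | exact Or.inr (Or.inl rfl) | exact Or.inr (Or.inr rfl)), s4 _ (by first | exact Or.inl ha | exact Or.inl hb | exact Or.inr (Or.inl rfl) | exact Or.inr (Or.inr rfl))⟩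
    · left; exact ⟨s1 _ (by first | exact Or.inl ha | exact Or.inl hb | exact Or.inr (Or.inl rfl) | exact Or.inr (Or.inr rfl)), s1 _ (by first | exact Or.inl ha | exact Or.inl hb | exact Or.inr (Or.inl rfl) | exact Or.inr (Or.inr rfl))⟩
    · left; exact ⟨s1 _ (by first | exact Or.inl ha | exact Or.inl hb | exact Or.inr (Or.inl rfl) | exact Or.inr (Or.inr rfl)), s1 _ (by first | exact Or.inl ha | exact Or.inl hb | exact Or.inr (Or.inl rfl) | exact Or.inr (Or.inr rfl))⟩
    · right; right; right; exact ⟨s4 _ (by first | exact Or.inl ha | exact Or.inl hb | exact Or.inr (Or.inl rfl) | exact Or.inr (Or.inr rfl)), s4 _ (by first | exact Or.inl ha | exact Or.inl hb | exact Or.inr (Or.inl rfl) | exact Or.inr (Or.inr rfl))⟩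
    · exact absurd rfl hab
    · right; left; exact s2
    · exact absurd rfl h1
    · left; exact ⟨s1 _ (by first | exact Or.inl ha | exact Or.inl hb | exact Or.inr (Or.inl rfl) | exact Or.inr (Or.inr rfl)), s1 _ (by first | exact Or.inl ha | exact Or.inl hb | exact Or.inr (Or.inl rfl) | exact Or.inr (Or.inr rfl))⟩
    · right; left; exact s2.symm
    · exact absurd rfl hab
    · exact absurd rfl h2
    · left; exact ⟨s1 _ (by first | exact Or.inl ha | exact Or.inl hb | exact Or.inr (Or.inl rfl) | exact Or.inr (Or.inr rfl)), s1 _ (by first | exact Or.inl ha | exact Or.inl hb | exact Or.inr (Or.inl rfl) | exact Or.inr (Or.inr rfl))⟩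
    · exact absurd rfl h1'
    · exact absurd rfl h2'
    · exact absurd rfl hab

def dS (S : Finset (Sym2 V)) (v : V) (C : Finset V) : ZMod 2 := ∑ x ∈ C, if s(v,x) ∈ S then 1 else 0

structure Unb (S D : Finset (Sym2 V)) (v w : V) (C : Finset V) : Prop where
  e : s(v,w) ∈ S
  hv : v ∉ C
  hw : w ∉ C
  cl : ∀ a b, s(a,b) ∈ S ∪ D → a ∈ C → b ≠ v → b ≠ w → b ∈ C
  u : (C.card : ZMod 2) + dS S v C = 1

lemma eul8a (h : Ctx S D) (hg : ¬ Good S D) (hE : ∀ x, pr S x = 0) {v w : V}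
    (hvw : s(v,w) ∈ S) : ∃ C, Unb S D v w C := by
  by_contra hcon
  push Not at hcon
  have hvw' := nlS h hvw
  obtain ⟨X, hX, hp⟩ := join (off (off (S ∪ D) v) w) (off_nd (off_nd h.nd v) w)
    (fun x => if x = v ∨ x = w then 0 else 1 + if s(v,x) ∈ S then 1 else 0) (by
    intro C hC
    set C' := (C.erase v).erase w with hC'
    have hmC : ∀ a, a ∈ C' ↔ a ≠ w ∧ a ≠ v ∧ a ∈ C := by intro a; rw [hC', mem_erase, mem_erase]
    have hu : (C'.card : ZMod 2) + dS S v C' ≠ 1 := by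
      intro hu
      refine hcon C' ⟨hvw, by rw [hmC]; tauto, by rw [hmC]; tauto, ?_, hu⟩
      intro a b hab ha hbv hbw
      rw [hmC] at ha ⊢
      refine ⟨hbw, hbv, hC a b ?_ ha.2.2⟩
      rw [mem_off, mem_off]
      simp only [Sym2.mem_iff]
      tauto
    have hu0 := (z2 _).resolve_right hu
    have e0 : ∑ x ∈ C, (if x = v ∨ x = w then (0 : ZMod 2) else 1 + if s(v,x) ∈ S then 1 else 0) = (C'.card : ZMod 2) + dS S v C' := by
      rw [dS, ← sum_one, ← Finset.sum_add_distrib, ← Finset.sum_erase C (a := v) (by rw [if_pos (Or.inl rfl)]),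
        ← Finset.sum_erase (C.erase v) (a := w) (by rw [if_pos (Or.inr rfl)]), ← hC']
      apply Finset.sum_congr rfl
      intro a ha
      rw [hmC] at ha
      rw [if_neg (by tauto)]
    exact e0.trans hu0)
  have hXm : ∀ e ∈ X, (e ∈ S ∪ D ∧ v ∉ e) ∧ w ∉ e := by
    intro e he; have := hX he; rw [mem_off, mem_off] at this; exact this
  have hprX : ∀ x, x ≠ v → x ≠ w → pr X x = 1 + if s(v,x) ∈ S then 1 else 0 := by
    intro x h1 h2; rw [hp, if_neg (by tauto)]
  have hpv : pr X v = 0 := by rw [hp, if_pos (by tauto)]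
  have hpw : pr X w = 0 := by rw [hp, if_pos (by tauto)]
  have h4v : pr (ato S v ∆ {s(v,w)} ∆ X) v = 1 := by
    rw [pr_symm, pr_symm, pr_ato_self, hE, hpv, pr_single]; simp
  have h4 : ∀ x, x ≠ v → x ≠ w → pr (ato S v ∆ {s(v,w)} ∆ X) x = 1 := by
    intro x h1 h2
    rw [pr_symm, pr_symm, pr_ato h1, hprX x h1 h2, pr_single, if_neg (by tauto : ¬ (x = v ∨ x = w))]
    linear_combination z2a (if s(v,x) ∈ S then (1 : ZMod 2) else 0)
  apply hg
  refine CL h v ∅ X {s(v,w)} ∅ {s(v,w)} ∅ (by simp) (fun e he => (hXm e he).1) ?_ (by simp) (by simp) (by simp) (by simp) ?_ ?_ OS_empty ?_ ?_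
  · intro e he; rw [mem_singleton] at he; subst he; exact ⟨mem_union_left _ hvw, by simp⟩
  · intro x hx
    rw [pr_empty, pr_off hx, hE]
    by_cases hxw : x = w
    · rw [hxw, hpw, if_pos hvw]; decide
    · rw [hprX x hx hxw]
      linear_combination - z2a (if s(v,x) ∈ S then (1 : ZMod 2) else 0) - z2a (1 : ZMod 2)
  · intro u hu
    obtain ⟨e, he, hue⟩ := dg_ne.1 hu
    rw [mem_singleton] at he; subst he
    rw [pr_one, if_pos hue]
  · intro x hx
    by_cases hxv : x = v
    · rw [hxv]; exact h4v
    · by_cases hxw : x = w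
      · exfalso
        subst hxw
        obtain ⟨e, he, hue⟩ := dg_ne.1 hx
        have h1 := hXm e
        rw [mem_symmDiff, mem_symmDiff, mem_ato, mem_singleton] at he
        have h2 : v ∈ e → e = s(v,x) := fun hh => (Sym2.mem_and_mem_iff hvw').1 ⟨hh, hue⟩
        have h3 : e = s(v,x) → e ∈ S ∧ v ∈ e := by rintro rfl; exact ⟨hvw, by simp⟩
        clear * - h1 he hue h2 h3
        tauto
      · exact h4 x hxv hxw
  · intro u hu huR _
    right; right
    refine ⟨dg_ne_of_pr h4v, dg_ne_of_pr (h4 u (nl h hu).symm ?_)⟩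
    rintro rfl; simp at huR

lemma unb_compl (h : Ctx S D) (hn : Odd (Fintype.card V)) (hE : ∀ x, pr S x = 0) {v w : V} {C : Finset V} (hu : Unb S D v w C) :
    Unb S D v w (univ \ insert v (insert w C)) := by
  have hvw' := nlS h hu.e
  refine ⟨hu.e, by simp, by simp, ?_, ?_⟩
  · intro a b hab ha hbv hbw
    simp only [mem_sdiff, mem_univ, mem_insert, true_and] at ha ⊢
    push Not at ha ⊢
    refine ⟨hbv, hbw, fun hb => ha.2.2 (hu.cl b a (by rwa [Sym2.eq_swap]) hb ha.1 ha.2.1)⟩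
  · have e1 : ∀ g : V → ZMod 2, ∑ x ∈ univ \ insert v (insert w C), g x + (g v + (g w + ∑ x ∈ C, g x)) = ∑ x, g x := by
      intro g
      rw [← Finset.sum_insert hu.hw, ← Finset.sum_insert (by rw [mem_insert]; have := hu.hv; tauto), Finset.sum_sdiff (by simp)]
    have a1 := e1 (fun _ => 1)
    have a2 := e1 (fun x => if s(v,x) ∈ S then 1 else 0)
    simp only [sum_one] at a1
    have c1 : ((univ : Finset V).card : ZMod 2) = 1 := by rw [ZMod.natCast_eq_one_iff_odd]; simpa using hn
    have hvv : s(v,v) ∉ S := fun hh => nlS h hh rfl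
    have c2 : ∑ x, (if s(v,x) ∈ S then (1 : ZMod 2) else 0) = 0 := by
      refine (Finset.sum_congr rfl ?_).trans (hand_univ (Y := ato S v) (fun a ha => nlS h (mem_ato.1 ha).1 rfl))
      intro x _
      by_cases hx : x = v
      · rw [hx, pr_ato_self, hE, if_neg hvv]
      · rw [pr_ato hx]
    rw [c1] at a1
    rw [c2, if_pos hu.e, if_neg hvv] at a2
    have a3 := hu.u
    unfold dS at a3 ⊢
    revert a1 a2 a3
    generalize (∑ x ∈ univ \ insert v (insert w C), if s(v,x) ∈ S then (1 : ZMod 2) else 0) = p1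
    generalize ((univ \ insert v (insert w C)).card : ZMod 2) = p2
    generalize (∑ x ∈ C, if s(v,x) ∈ S then (1 : ZMod 2) else 0) = p3
    generalize (C.card : ZMod 2) = p4
    revert p1 p2 p3 p4; decide

lemma eul8b (h : Ctx S D) (hn : Odd (Fintype.card V)) (hg : ¬ Good S D) (hE : ∀ x, pr S x = 0) :
    ∀ n : ℕ, ∀ v w : V, ∀ C : Finset V, C.card = n → Unb S D v w C → False := by
  intro n
  induction n using Nat.strong_induction_on with | _ n ih =>
  intro v w C hCn hu
  by_cases hcase : ∃ x ∈ C, ∃ z, s(x,z) ∈ S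
  · obtain ⟨x, hx, z, hxz⟩ := hcase
    have hxz' := nlS h hxz
    have hxv : x ≠ v := by rintro rfl; exact hu.hv hx
    have hxw : x ≠ w := by rintro rfl; exact hu.hw hx
    have hvwH : s(v,w) ∈ S ∪ D := mem_union_left _ hu.e
    have hwvH : s(w,v) ∈ S ∪ D := by rwa [Sym2.eq_swap]
    obtain ⟨C', hu', hv', hw'⟩ : ∃ C', Unb S D x z C' ∧ v ∉ C' ∧ w ∉ C' := by
      obtain ⟨C', hu'⟩ := eul8a h hg hE hxz
      by_cases hc : v ∉ C' ∧ w ∉ C'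
      · exact ⟨C', hu', hc⟩
      · refine ⟨_, unb_compl h hn hE hu', ?_, ?_⟩
        · simp only [mem_sdiff, mem_univ, mem_insert, true_and, not_not]
          by_cases h1 : v = z
          · tauto
          · by_cases h2 : v ∈ C'
            · tauto
            · have h3 : w ∈ C' := by tauto
              exact absurd (hu'.cl w v hwvH h3 hxv.symm h1) h2
        · simp only [mem_sdiff, mem_univ, mem_insert, true_and, not_not]
          by_cases h1 : w = z
          · tauto
          · by_cases h2 : w ∈ C'
            · tauto
            · have h3 : v ∈ C' := by tauto
              exact absurd (hu'.cl v w hvwH h3 hxw.symm h1) h2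
    have hnv : ∀ a ∈ C', a ≠ v ∧ a ≠ w := by
      intro a ha; constructor
      · rintro rfl; exact hv' ha
      · rintro rfl; exact hw' ha
    have hE1 : ((C' \ C).card : ZMod 2) = 0 := by
      apply T2 h hn hg z
      · intro hh; exact hu'.hw (mem_sdiff.1 hh).1
      · intro a b hab ha
        rw [mem_off] at hab
        rw [mem_sdiff] at ha ⊢
        have hba : s(b,a) ∈ S ∪ D := by rw [Sym2.eq_swap]; exact hab.1
        have hbz : b ≠ z := by rintro rfl; apply hab.2; simp
        have hav := hnv a ha.1
        have hbx : b ≠ x := by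
          rintro rfl
          exact ha.2 (hu.cl b a hba hx hav.1 hav.2)
        refine ⟨hu'.cl a b hab.1 ha.1 hbx hbz, fun hb => ?_⟩
        exact ha.2 (hu.cl b a hba hb hav.1 hav.2)
    have hE2 : dS S x (C' \ C) = 0 := by
      apply Finset.sum_eq_zero
      intro a ha
      rw [mem_sdiff] at ha
      rw [if_neg]
      intro hh
      have hav := hnv a ha.1
      exact ha.2 (hu.cl x a (mem_union_left _ hh) hx hav.1 hav.2)
    refine ih (C' ∩ C).card ?_ x z (C' ∩ C) rfl ⟨hxz, fun hh => hu'.hv (mem_inter.1 hh).1, fun hh => hu'.hw (mem_inter.1 hh).1, ?_, ?_⟩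
    · rw [← hCn]
      apply card_lt_card
      refine ⟨inter_subset_right, fun hh => hu'.hv (mem_inter.1 (hh hx)).1⟩
    · intro a b hab ha hbx hbz
      rw [mem_inter] at ha ⊢
      have hb := hu'.cl a b hab ha.1 hbx hbz
      exact ⟨hb, hu.cl a b hab ha.2 (hnv b hb).1 (hnv b hb).2⟩
    · have b1 : C'.card = (C' \ C).card + (C' ∩ C).card := (card_sdiff_add_card_inter _ _).symm
      have b2 : dS S x C' = dS S x (C' \ C) + dS S x (C' ∩ C) := by
        unfold dS
        rw [← Finset.sum_union (disjoint_sdiff_inter _ _), sdiff_union_inter]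
      have b3 := hu'.u
      rw [b1, b2, Nat.cast_add, hE1, hE2, zero_add, zero_add] at b3
      exact b3
  · push Not at hcase
    have hne : C.Nonempty := by
      by_contra hh
      rw [not_nonempty_iff_eq_empty] at hh
      have := hu.u
      rw [hh] at this
      simp [dS] at this
    obtain ⟨x, hx⟩ := hne
    have hadj := eul6' h hn hg hE (hcase x hx)
    have hcomp := (unb_compl h hn hE hu).u
    have hemp : univ \ insert v (insert w C) = ∅ := by
      ext b
      simp only [mem_sdiff, mem_univ, mem_insert, true_and, notMem_empty, iff_false, not_not]
      by_cases h1 : b = v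
      · tauto
      by_cases h2 : b = w
      · tauto
      by_cases h3 : b = x
      · rw [h3]; tauto
      exact Or.inr (Or.inr (hu.cl x b (mem_union_right _ (hadj b h3)) hx h1 h2))
    rw [hemp] at hcomp
    simp [dS] at hcomp

theorem main (h : Ctx S D) (hn4 : 4 ≤ Fintype.card V) : Good S D := by
  rcases Nat.even_or_odd (Fintype.card V) with hn | hn
  · exact T1 h hn
  by_contra hg
  have hE := odd5 h hn hn4 hg
  rcases S.eq_empty_or_nonempty with hS | ⟨e, he⟩
  · refine hg (eul7 h hn hn4 hS ?_)
    intro a b hab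
    exact eul6' h hn hg hE (by simp [hS]) b hab.symm
  · induction e with | _ v w =>
    obtain ⟨C, hC⟩ := eul8a h hg hE he
    exact eul8b h hn hg hE _ v w C rfl hC

end eul
end OddCol

/-- Every connected multigraph of order at least 4 is odd 4-edge-colorable. -/
theorem stmt3 {V E : Type*} [Fintype V] [Fintype E] (f : E → Sym2 V)
    (hloopless : ∀ e, ¬ (f e).IsDiag)
    (hconn : (SimpleGraph.fromEdgeSet (Set.range f)).Connected)
    (hcard : 4 ≤ Fintype.card V) :
    MOddEdgeColorable f 4 := by
  classical
  apply OddCol.final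
  have hmem : ∀ p : Sym2 V, p ∈ ((Finset.univ.filter fun p => Odd (Finset.univ.filter fun e => f e = p).card) ∪
      (Finset.univ.filter fun p => Even (Finset.univ.filter fun e => f e = p).card ∧ (Finset.univ.filter fun e => f e = p).card ≠ 0)) ↔ ∃ e, f e = p := by
    intro p
    rw [Finset.mem_union, Finset.mem_filter, Finset.mem_filter]
    simp only [Finset.mem_univ, true_and]
    have h0 : (Finset.univ.filter fun e => f e = p).card ≠ 0 ↔ ∃ e, f e = p := by
      rw [Finset.card_ne_zero]
      constructor
      · rintro ⟨e, he⟩; exact ⟨e, by simpa using he⟩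
      · rintro ⟨e, he⟩; exact ⟨e, by simpa using he⟩
    rw [← h0]
    constructor
    · rintro (h | h)
      · intro h1; rw [h1] at h; exact absurd h (by decide)
      · exact h.2
    · intro h
      rcases Nat.even_or_odd (Finset.univ.filter fun e => f e = p).card with h1 | h1
      · exact Or.inr ⟨h1, h⟩
      · exact Or.inl h1
  apply OddCol.main _ hcard
  refine ⟨?_, ?_, ?_⟩
  · intro p h1 h2
    simp only [Finset.mem_filter, Finset.mem_univ, true_and] at h1 h2
    exact (Nat.not_even_iff_odd.2 h1) h2.1
  · intro a ha
    rw [hmem] at ha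
    obtain ⟨e, he⟩ := ha
    apply hloopless e; rw [he]; simp
  · intro C hne hC
    obtain ⟨a, ha⟩ := hne
    ext b
    simp only [Finset.mem_univ, iff_true]
    obtain ⟨p⟩ := hconn.preconnected a b
    induction p with
    | nil => exact ha
    | cons hadj p ih =>
      apply ih
      rw [SimpleGraph.fromEdgeSet_adj] at hadj
      exact hC _ _ ((hmem _).2 hadj.1) ha
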